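/- arXiv:1807.09111 — 10 statements merged into one kernel-verified Lean document; each statement's English description precedes it below -/
import Mathlib

section
/- Let k : Ω × Ω → ℝ^{m×m} be a matrix-valued kernel admitting a decomposition (k_i, Q_i)_{i=1}^p in which every scalar-valued kernel k_i is strictly positive definite, every matrix Q_i is symmetric positive semidefinite, and the sum Q_1 + … + Q_p is positive definite. Then k is strictly positive definite, i.e. for every n ∈ ℕ, every tuple of pairwise distinct points x_1,…,x_n ∈ Ω and every tuple of vectors α_1,…,α_n ∈ ℝ^m that are not all zero, Σ_{i=1}^n Σ_{j=1}^n α_iᵀ k(x_i,x_j) α_j > 0. -/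
open Matrix BigOperators

/-!
Write `Q = Bᴴ * B`. For fixed points, the quadratic form of `κ(x, y) • Q` at the vectors `α a` is
the sum over the rows `j` of `B` of the quadratic form of `κ` at the scalars `(B *ᵥ α a) j`. If `κ`
is strictly positive definite, it is therefore nonnegative, and positive as soon as some
`Q *ᵥ α a` is nonzero. When `∑ i, Q i` is positive definite, a nonzero `α a` is not annihilated by
every `Q i`, so at least one summand of the separable kernel contributes a positive amount.
-/

section QuadraticForm

variable {n m : Type*} [Fintype n] [Fintype m]

lemma sum_sum_mul_dotProduct_conjTranspose_mul_self_mulVec {R l : Type*} [CommSemiring R]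
    [StarRing R] [Fintype l] (K : n → n → R) (B : Matrix l m R) (α : n → m → R) :
    ∑ a, ∑ b, K a b * (star (α a) ⬝ᵥ (Bᴴ * B) *ᵥ α b) =
      ∑ j, ∑ a, ∑ b, star ((B *ᵥ α a) j) * (B *ᵥ α b) j * K a b := by
  have mul_dotProduct_eq_sum (a b : n) : K a b * (star (α a) ⬝ᵥ (Bᴴ * B) *ᵥ α b) =
      ∑ j, star ((B *ᵥ α a) j) * (B *ᵥ α b) j * K a b := by
    rw [← mulVec_mulVec, dotProduct_mulVec, ← star_mulVec, mul_comm]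
    exact Finset.sum_mul ..
  simp only [mul_dotProduct_eq_sum]
  exact Finset.sum_comm_cycle

lemma sum_sum_star_mul_mul_nonneg_of_pos {R : Type*} [Semiring R] [StarRing R] [PartialOrder R]
    {K : n → n → R} (hK : ∀ c : n → R, c ≠ 0 → 0 < ∑ a, ∑ b, star (c a) * c b * K a b) (c : n → R) :
    0 ≤ ∑ a, ∑ b, star (c a) * c b * K a b := by
  obtain rfl | hc := eq_or_ne c 0
  · simp
  · exact (hK c hc).le

open scoped ComplexOrder

variable {𝕜 : Type*} [RCLike 𝕜] {K : n → n → 𝕜} {Q : Matrix m m 𝕜}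

open scoped MatrixOrder Matrix.Norms.L2Operator in
lemma exists_eq_conjTranspose_mul_self_of_posSemidef (hQ : Q.PosSemidef) :
    ∃ B : Matrix m m 𝕜, Q = Bᴴ * B := by
  classical
  exact CStarAlgebra.nonneg_iff_eq_star_mul_self.mp hQ.nonneg

lemma sum_sum_mul_dotProduct_mulVec_nonneg
    (hK : ∀ c : n → 𝕜, 0 ≤ ∑ a, ∑ b, star (c a) * c b * K a b) (hQ : Q.PosSemidef)
    (α : n → m → 𝕜) :
    0 ≤ ∑ a, ∑ b, K a b * (star (α a) ⬝ᵥ Q *ᵥ α b) := by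
  obtain ⟨B, rfl⟩ := exists_eq_conjTranspose_mul_self_of_posSemidef hQ
  rw [sum_sum_mul_dotProduct_conjTranspose_mul_self_mulVec]
  exact Finset.sum_nonneg fun j _ ↦ hK fun a ↦ (B *ᵥ α a) j

lemma sum_sum_mul_dotProduct_mulVec_pos
    (hK : ∀ c : n → 𝕜, c ≠ 0 → 0 < ∑ a, ∑ b, star (c a) * c b * K a b) (hQ : Q.PosSemidef)
    {α : n → m → 𝕜} (hα : ∃ a, Q *ᵥ α a ≠ 0) :
    0 < ∑ a, ∑ b, K a b * (star (α a) ⬝ᵥ Q *ᵥ α b) := by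
  obtain ⟨B, rfl⟩ := exists_eq_conjTranspose_mul_self_of_posSemidef hQ
  obtain ⟨a, ha⟩ := hα
  have mulVec_ne_zero : B *ᵥ α a ≠ 0 := fun h ↦ ha (by rw [← mulVec_mulVec, h, mulVec_zero])
  obtain ⟨j, hj⟩ := Function.ne_iff.mp mulVec_ne_zero
  rw [sum_sum_mul_dotProduct_conjTranspose_mul_self_mulVec]
  exact Finset.sum_pos'
    (fun j _ ↦ sum_sum_star_mul_mul_nonneg_of_pos hK fun a ↦ (B *ᵥ α a) j)
    ⟨j, Finset.mem_univ j, hK (fun a ↦ (B *ᵥ α a) j) fun h ↦ hj (congrFun h a)⟩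

end QuadraticForm

section SeparableKernel

variable {ι m : Type*} [Fintype ι] [Fintype m]

lemma exists_mulVec_ne_zero_of_posDef_sum {R : Type*} [Ring R] [PartialOrder R] [StarRing R]
    {Q : ι → Matrix m m R} (hQ : (∑ i, Q i).PosDef) {v : m → R} (hv : v ≠ 0) :
    ∃ i, Q i *ᵥ v ≠ 0 := by
  by_contra! h
  have sum_mulVec_eq_zero : (∑ i, Q i) *ᵥ v = 0 := by
    rw [sum_mulVec, Finset.sum_eq_zero fun i _ ↦ h i]
  simpa [sum_mulVec_eq_zero] using hQ.dotProduct_mulVec_pos hv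

lemma sum_sum_dotProduct_sum_smul_mulVec {R n : Type*} [CommSemiring R] [Star R] [Fintype n]
    (K : ι → n → n → R) (Q : ι → Matrix m m R) (α : n → m → R) :
    ∑ a, ∑ b, star (α a) ⬝ᵥ (∑ i, K i a b • Q i) *ᵥ α b =
      ∑ i, ∑ a, ∑ b, K i a b * (star (α a) ⬝ᵥ Q i *ᵥ α b) := by
  simp only [sum_mulVec, dotProduct_sum, smul_mulVec, dotProduct_smul, smul_eq_mul]
  exact Finset.sum_comm_cycle

open scoped ComplexOrder in
theorem separable_kernel_strictly_positive_definite_general {𝕜 Ω : Type*} [RCLike 𝕜]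
    (k : Ω → Ω → Matrix m m 𝕜) (ks : ι → Ω → Ω → 𝕜) (Q : ι → Matrix m m 𝕜)
    (hdecomp : ∀ x y, k x y = ∑ i, ks i x y • Q i)
    (hks_spd : ∀ i (n : ℕ) (x : Fin n → Ω), Function.Injective x →
      ∀ c : Fin n → 𝕜, c ≠ 0 → 0 < ∑ a, ∑ b, star (c a) * c b * ks i (x a) (x b))
    (hQpsd : ∀ i, (Q i).PosSemidef) (hQsum : (∑ i, Q i).PosDef)
    (n : ℕ) (x : Fin n → Ω) (hx : Function.Injective x) (α : Fin n → m → 𝕜) (hα : α ≠ 0) :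
    0 < ∑ a, ∑ b, star (α a) ⬝ᵥ k (x a) (x b) *ᵥ α b := by
  obtain ⟨a, ha⟩ := Function.ne_iff.mp hα
  obtain ⟨i, hi⟩ := exists_mulVec_ne_zero_of_posDef_sum hQsum ha
  have gram_pos (i : ι) := hks_spd i n x hx
  simp only [hdecomp]
  rw [sum_sum_dotProduct_sum_smul_mulVec fun i a b ↦ ks i (x a) (x b)]
  exact Finset.sum_pos'
    (fun i _ ↦ sum_sum_mul_dotProduct_mulVec_nonneg
      (sum_sum_star_mul_mul_nonneg_of_pos (gram_pos i)) (hQpsd i) α)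
    ⟨i, Finset.mem_univ i, sum_sum_mul_dotProduct_mulVec_pos (gram_pos i) (hQpsd i) ⟨a, hi⟩⟩

end SeparableKernel

/-- A separable matrix-valued kernel whose scalar kernels are strictly
positive definite, whose matrices are symmetric positive semidefinite and whose
matrix sum is positive definite, is strictly positive definite. -/
theorem separable_kernel_strictly_positive_definite
    {Ω : Type*} [Nonempty Ω] {m p : ℕ}
    (k : Ω → Ω → Matrix (Fin m) (Fin m) ℝ)
    (hker : ∀ x y, k x y = (k y x)ᵀ)
    (ks : Fin p → Ω → Ω → ℝ) (Q : Fin p → Matrix (Fin m) (Fin m) ℝ)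
    (hkssym : ∀ i x y, ks i x y = ks i y x)
    (hQsym : ∀ i, (Q i).IsSymm)
    (hdecomp : ∀ x y, k x y = ∑ i, ks i x y • Q i)
    (hks_spd : ∀ i (n : ℕ) (x : Fin n → Ω), Function.Injective x →
      ∀ c : Fin n → ℝ, c ≠ 0 → 0 < ∑ a, ∑ b, c a * c b * ks i (x a) (x b))
    (hQpsd : ∀ i, (Q i).PosSemidef)
    (hQsum : (∑ i, Q i).PosDef) :
    ∀ (n : ℕ) (x : Fin n → Ω), Function.Injective x →
      ∀ α : Fin n → Fin m → ℝ, α ≠ 0 →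
        0 < ∑ a, ∑ b, α a ⬝ᵥ (k (x a) (x b)).mulVec (α b) := by
  simpa only [star_trivial] using separable_kernel_strictly_positive_definite_general k ks Q hdecomp
    (by simpa only [star_trivial] using hks_spd) hQpsd hQsum
end

section
/- Let K_1,…,K_p ∈ ℝ^{n×n} be symmetric positive definite matrices and let Q_1,…,Q_p ∈ ℝ^{m×m} be symmetric positive semidefinite matrices such that Q_1 + … + Q_p is positive definite. Then the matrix Σ_{i=1}^p K_i ⊗ Q_i ∈ ℝ^{nm×nm}, where ⊗ denotes the Kronecker product, is positive definite. -/
open Matrix BigOperators Kronecker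

/-!
A positive semidefinite matrix is positive definite exactly when its kernel is trivial, and the
kernel of a sum of positive semidefinite matrices is the intersection of their kernels. As `K i` is
invertible, `K i ⊗ₖ Q i` and `1 ⊗ₖ Q i` have the same kernel. So `∑ i, K i ⊗ₖ Q i` has the same
kernel as `∑ i, 1 ⊗ₖ Q i = 1 ⊗ₖ ∑ i, Q i`, which is positive definite.
-/

theorem kronecker_sum {ι l m n p R : Type*} [NonUnitalNonAssocSemiring R] (s : Finset ι)
    (A : Matrix l m R) (B : ι → Matrix n p R) :
    A ⊗ₖ (∑ i ∈ s, B i) = ∑ i ∈ s, A ⊗ₖ B i := by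
  ext
  simp [Matrix.sum_apply, Finset.mul_sum]

theorem kronecker_mulVec_eq_zero_iff_one_kronecker_of_isUnit {l m n R : Type*} [Finite l]
    [Fintype m] [Fintype n] [DecidableEq n] [CommSemiring R] {A : Matrix n n R} (hA : IsUnit A)
    (B : Matrix l m R) (x : n × m → R) :
    (A ⊗ₖ B) *ᵥ x = 0 ↔ ((1 : Matrix n n R) ⊗ₖ B) *ᵥ x = 0 := by
  classical
  have := Fintype.ofFinite l
  have factor : A ⊗ₖ B = (A ⊗ₖ (1 : Matrix l l R)) * ((1 : Matrix n n R) ⊗ₖ B) := by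
    rw [← mul_kronecker_mul, Matrix.mul_one, Matrix.one_mul]
  have injective : Function.Injective (A ⊗ₖ (1 : Matrix l l R)).mulVec :=
    mulVec_injective_of_isUnit (hA.kronecker isUnit_one)
  rw [factor, ← mulVec_mulVec]
  exact injective.eq_iff' (mulVec_zero _)

section RCLike

open scoped ComplexOrder

variable {𝕜 ι m n : Type*} [RCLike 𝕜]

theorem sum_mulVec_eq_zero_iff_of_posSemidef [Fintype n] {s : Finset ι} {A : ι → Matrix n n 𝕜}
    (hA : ∀ i ∈ s, (A i).PosSemidef) (x : n → 𝕜) :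
    (∑ i ∈ s, A i) *ᵥ x = 0 ↔ ∀ i ∈ s, A i *ᵥ x = 0 := by
  rw [← (posSemidef_sum s hA).dotProduct_mulVec_zero_iff, sum_mulVec, dotProduct_sum,
    Finset.sum_eq_zero_iff_of_nonneg fun i hi ↦ (hA i hi).dotProduct_mulVec_nonneg x]
  exact forall₂_congr fun i hi ↦ (hA i hi).dotProduct_mulVec_zero_iff x

theorem posDef_iff_forall_mulVec_eq_zero_of_posSemidef [Fintype n] {A : Matrix n n 𝕜}
    (hA : A.PosSemidef) : A.PosDef ↔ ∀ x, A *ᵥ x = 0 → x = 0 := by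
  classical
  rw [hA.posDef_iff_isUnit, ← mulVec_injective_iff_isUnit]
  exact injective_iff_map_eq_zero A.mulVecLin

theorem sum_kronecker_mulVec_eq_zero_iff_one_kronecker_sum [Fintype m] [Fintype n] [DecidableEq n]
    {s : Finset ι} {K : ι → Matrix n n 𝕜} {Q : ι → Matrix m m 𝕜} (hK : ∀ i ∈ s, (K i).PosDef)
    (hQ : ∀ i ∈ s, (Q i).PosSemidef) (x : n × m → 𝕜) :
    (∑ i ∈ s, K i ⊗ₖ Q i) *ᵥ x = 0 ↔ ((1 : Matrix n n 𝕜) ⊗ₖ ∑ i ∈ s, Q i) *ᵥ x = 0 := by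
  rw [kronecker_sum,
    sum_mulVec_eq_zero_iff_of_posSemidef fun i hi ↦ (hK i hi).posSemidef.kronecker (hQ i hi),
    sum_mulVec_eq_zero_iff_of_posSemidef fun i hi ↦ PosSemidef.one.kronecker (hQ i hi)]
  exact forall₂_congr fun i hi ↦
    kronecker_mulVec_eq_zero_iff_one_kronecker_of_isUnit (hK i hi).isUnit (Q i) x

theorem sum_kronecker_posDef_general [Finite m] [Finite n] {s : Finset ι}
    {K : ι → Matrix n n 𝕜} {Q : ι → Matrix m m 𝕜} (hK : ∀ i ∈ s, (K i).PosDef)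
    (hQ : ∀ i ∈ s, (Q i).PosSemidef) (hQsum : (∑ i ∈ s, Q i).PosDef) :
    (∑ i ∈ s, K i ⊗ₖ Q i).PosDef := by
  classical
  have := Fintype.ofFinite m
  have := Fintype.ofFinite n
  have sum_posSemidef : (∑ i ∈ s, K i ⊗ₖ Q i).PosSemidef :=
    posSemidef_sum s fun i hi ↦ (hK i hi).posSemidef.kronecker (hQ i hi)
  have one_kronecker_posDef : ((1 : Matrix n n 𝕜) ⊗ₖ ∑ i ∈ s, Q i).PosDef :=
    PosDef.one.kronecker hQsum
  refine (posDef_iff_forall_mulVec_eq_zero_of_posSemidef sum_posSemidef).2 fun x hx ↦ ?_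
  rw [sum_kronecker_mulVec_eq_zero_iff_one_kronecker_sum hK hQ] at hx
  exact (posDef_iff_forall_mulVec_eq_zero_of_posSemidef one_kronecker_posDef.posSemidef).1
    one_kronecker_posDef x hx

end RCLike

/-- If `K₁,…,K_p` are symmetric positive definite `n×n` matrices and
`Q₁,…,Q_p` are symmetric positive semidefinite `m×m` matrices whose sum is positive
definite, then `∑ i, K i ⊗ₖ Q i` is positive definite. -/
theorem sum_kronecker_posDef {n m p : ℕ} (hn : 1 ≤ n) (hm : 1 ≤ m)
    (K : Fin p → Matrix (Fin n) (Fin n) ℝ)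
    (Q : Fin p → Matrix (Fin m) (Fin m) ℝ)
    (hK : ∀ i, (K i).PosDef)
    (hQ : ∀ i, (Q i).PosSemidef)
    (hQsum : (∑ i, Q i).PosDef) :
    (∑ i, K i ⊗ₖ Q i).PosDef :=
  sum_kronecker_posDef_general (fun i _ ↦ hK i) (fun i _ ↦ hQ i) hQsum
end

section
/- Let Q_1,…,Q_p ∈ ℝ^{m×m} be symmetric matrices. Then the following are equivalent: (i) rank(Σ_{i=1}^p Q_i) = Σ_{i=1}^p rank(Q_i); (ii) the ranges R(Q_1),…,R(Q_p) (as subspaces of ℝ^m) are independent, i.e. their sum is direct, and R(Σ_{i=1}^p Q_i) = R(Q_1) ⊕ … ⊕ R(Q_p). -/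
open Matrix BigOperators

/-!
The range of `∑ i, Q i` lies in the sum of the ranges, which is the image of their external direct
sum, so `rank (∑ i, Q i) ≤ dim (⨆ i, range (Q i)) ≤ ∑ i, rank (Q i)`. The first inequality is an
equality iff the two subspaces coincide, the second iff the map from the external direct sum is
injective.
-/

section Submodule

variable {K W ι : Type*} [DivisionRing K] [AddCommGroup W] [Module K W]
  [Fintype ι] (V : ι → Submodule K W) [∀ i, FiniteDimensional K (V i)]

lemma finrank_iSup_add_finrank_ker_coeLinearMap [DecidableEq ι] :
    Module.finrank K ↥(⨆ i, V i) + Module.finrank K (DirectSum.coeLinearMap V).ker =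
      ∑ i, Module.finrank K (V i) := by
  rw [← DirectSum.range_coeLinearMap, LinearMap.finrank_range_add_finrank_ker,
    Module.finrank_directSum]

lemma finrank_iSup_le_sum_finrank :
    Module.finrank K ↥(⨆ i, V i) ≤ ∑ i, Module.finrank K (V i) := by
  classical
  exact le_of_add_le_left (finrank_iSup_add_finrank_ker_coeLinearMap V).le

lemma finrank_iSup_eq_sum_finrank_iff_iSupIndep :
    Module.finrank K ↥(⨆ i, V i) = ∑ i, Module.finrank K (V i) ↔ iSupIndep V := by
  classical
  rw [← finrank_iSup_add_finrank_ker_coeLinearMap V, left_eq_add, Submodule.finrank_eq_zero,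
    LinearMap.ker_eq_bot]
  exact (iSupIndep_iff_dfinsupp_lsum_injective V).symm

end Submodule

lemma range_sum_le_biSup_range {R M N ι : Type*} [Semiring R] [AddCommMonoid M] [AddCommMonoid N]
    [Module R M] [Module R N] (s : Finset ι) (f : ι → M →ₗ[R] N) :
    (∑ i ∈ s, f i).range ≤ ⨆ i ∈ s, (f i).range := by
  rintro _ ⟨x, rfl⟩
  rw [LinearMap.sum_apply]
  exact Submodule.sum_mem_biSup fun i _ => (f i).mem_range_self x

lemma finrank_range_sum_eq_sum_finrank_range_iff {K V W ι : Type*} [DivisionRing K] [AddCommGroup V]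
    [AddCommGroup W] [Module K V] [Module K W] [Fintype ι] (f : ι → V →ₗ[K] W)
    [∀ i, FiniteDimensional K (f i).range] :
    Module.finrank K (∑ i, f i).range = ∑ i, Module.finrank K (f i).range ↔
      (iSupIndep fun i => (f i).range) ∧ (∑ i, f i).range = ⨆ i, (f i).range := by
  have range_le : (∑ i, f i).range ≤ ⨆ i, (f i).range := by
    simpa only [Finset.mem_univ, iSup_pos] using range_sum_le_biSup_range Finset.univ f
  have finrank_le := Submodule.finrank_mono range_le
  have finrank_iSup_le := finrank_iSup_le_sum_finrank fun i => (f i).range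
  rw [← finrank_iSup_eq_sum_finrank_iff_iSupIndep]
  constructor
  · intro h
    exact ⟨finrank_iSup_le.antisymm (h ▸ finrank_le),
      Submodule.eq_of_le_of_finrank_le range_le (h ▸ finrank_iSup_le)⟩
  · rintro ⟨h_iSup, h_range⟩
    rw [h_range, h_iSup]

lemma mulVecLin_sum {R m n ι : Type*} [CommSemiring R] [Fintype n] (s : Finset ι)
    (A : ι → Matrix m n R) : (∑ i ∈ s, A i).mulVecLin = ∑ i ∈ s, (A i).mulVecLin := by
  ext1 x
  simp only [mulVecLin_apply, sum_mulVec, LinearMap.sum_apply]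

theorem rank_sum_eq_sum_rank_iff_ranges_independent_general {K m n ι : Type*} [Field K]
    [Fintype n] [Fintype ι] (Q : ι → Matrix m n K) :
    (∑ i, Q i).rank = ∑ i, (Q i).rank ↔
      (iSupIndep fun i => LinearMap.range (Q i).mulVecLin) ∧
        LinearMap.range (∑ i, Q i).mulVecLin
          = ⨆ i, LinearMap.range (Q i).mulVecLin := by
  rw [Matrix.rank, mulVecLin_sum]
  exact finrank_range_sum_eq_sum_finrank_range_iff fun i => (Q i).mulVecLin

/-- For symmetric matrices `Q₁,…,Q_p`, the rank of the sum equals the sum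
of the ranks iff the ranges are independent (their sum is direct) and the range of the
sum is the (direct) sum of the ranges. -/
theorem rank_sum_eq_sum_rank_iff_ranges_independent {m p : ℕ}
    (Q : Fin p → Matrix (Fin m) (Fin m) ℝ)
    (hQ : ∀ i, (Q i).IsSymm) :
    (∑ i, Q i).rank = ∑ i, (Q i).rank ↔
      (iSupIndep fun i => LinearMap.range (Q i).mulVecLin) ∧
        LinearMap.range (∑ i, Q i).mulVecLin
          = ⨆ i, LinearMap.range (Q i).mulVecLin :=
  rank_sum_eq_sum_rank_iff_ranges_independent_general Q
end

section
/- Let k : Ω × Ω → ℝ^{m×m} be a matrix-valued kernel admitting a decomposition of length p. Then the following are equivalent: (i) p is minimal, i.e. every decomposition of k has length at least p; (ii) for every decomposition (k_i, Q_i)_{i=1}^p of k of length p, the family of functions {k_1,…,k_p} is linearly independent in the real vector space of functions Ω × Ω → ℝ, and the family of matrices {Q_1,…,Q_p} is linearly independent in ℝ^{m×m}. -/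
open Matrix BigOperators

/-- A decomposition of a matrix-valued kernel `k` of length `p`: a tuple of scalar-valued
kernels `ks i` and symmetric matrices `Q i` with `k x y = ∑ i, ks i x y • Q i`. -/
def IsDecomposition {Ω : Type*} {m : ℕ} (k : Ω → Ω → Matrix (Fin m) (Fin m) ℝ)
    {p : ℕ} (ks : Fin p → Ω → Ω → ℝ) (Q : Fin p → Matrix (Fin m) (Fin m) ℝ) : Prop :=
  (∀ i x y, ks i x y = ks i y x) ∧ (∀ i, (Q i).IsSymm) ∧
    ∀ x y, k x y = ∑ i, ks i x y • Q i

/-! If one factor of a sum `∑ B (u i) (v i)` of a bilinear map is a linear combination of the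
others, bilinearity lets its summand be absorbed into theirs, so a sum of minimal length has
linearly independent factors on both sides. Conversely, a sum that is shorter than `p` can be
padded by zero factors to length `p`, and a family containing zero is linearly dependent. A kernel
decomposition is the case `B κ Q = κ • Q`, with the factors confined to the subspaces of symmetric
kernels and symmetric matrices. -/

theorem exists_sum_smul_succAbove_eq_of_not_linearIndependent {K U : Type*} [DivisionRing K]
    [AddCommGroup U] [Module K U] {n : ℕ} {u : Fin (n + 1) → U} (hu : ¬LinearIndependent K u) :
    ∃ (i : Fin (n + 1)) (c : Fin n → K), ∑ j, c j • u (i.succAbove j) = u i := by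
  rw [linearIndependent_iff_notMem_span] at hu
  push Not at hu
  obtain ⟨i, hi⟩ := hu
  rw [← Set.compl_eq_univ_sdiff, ← Fin.range_succAbove, ← Set.range_comp] at hi
  exact ⟨i, (Submodule.mem_span_range_iff_exists_fun K).1 hi⟩

/-- A representation of `e` as a sum of `p` values of the bilinear map `B`, with left factors `u i`
in `S` and right factors `v i` in `T`; the submodules encode side conditions such as symmetry. -/
structure IsBilinDecomposition {R U V E : Type*} [CommSemiring R] [AddCommMonoid U]
    [AddCommMonoid V] [AddCommMonoid E] [Module R U] [Module R V] [Module R E]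
    (B : U →ₗ[R] V →ₗ[R] E) (S : Submodule R U) (T : Submodule R V) (e : E)
    {p : ℕ} (u : Fin p → U) (v : Fin p → V) : Prop where
  left_mem : ∀ i, u i ∈ S
  right_mem : ∀ i, v i ∈ T
  eq_sum : e = ∑ i, B (u i) (v i)

namespace IsBilinDecomposition

section CommSemiring

variable {R U V E : Type*} [CommSemiring R] [AddCommMonoid U] [AddCommMonoid V] [AddCommMonoid E]
  [Module R U] [Module R V] [Module R E] {B : U →ₗ[R] V →ₗ[R] E}
  {S : Submodule R U} {T : Submodule R V} {e : E}

theorem flip {p : ℕ} {u : Fin p → U} {v : Fin p → V} (h : IsBilinDecomposition B S T e u v) :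
    IsBilinDecomposition B.flip T S e v u :=
  ⟨h.right_mem, h.left_mem, h.eq_sum⟩

theorem append_zero {q : ℕ} {u : Fin q → U} {v : Fin q → V}
    (h : IsBilinDecomposition B S T e u v) (r : ℕ) :
    IsBilinDecomposition B S T e (Fin.append u (0 : Fin r → U)) (Fin.append v (0 : Fin r → V)) where
  left_mem := Fin.addCases (by simpa using h.left_mem) (by simp)
  right_mem := Fin.addCases (by simpa using h.right_mem) (by simp)
  eq_sum := by simpa [Fin.sum_univ_add] using h.eq_sum

theorem succAbove_of_sum_smul_eq {n : ℕ} {u : Fin (n + 1) → U} {v : Fin (n + 1) → V}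
    (h : IsBilinDecomposition B S T e u v) {i : Fin (n + 1)} {c : Fin n → R}
    (hc : ∑ j, c j • u (i.succAbove j) = u i) :
    IsBilinDecomposition B S T e (fun j ↦ u (i.succAbove j))
      (fun j ↦ v (i.succAbove j) + c j • v i) where
  left_mem _ := h.left_mem _
  right_mem j := T.add_mem (h.right_mem _) (T.smul_mem (c j) (h.right_mem i))
  eq_sum := calc
    e = B (u i) (v i) + ∑ j, B (u (i.succAbove j)) (v (i.succAbove j)) := by
      rw [h.eq_sum, Fin.sum_univ_succAbove _ i]
    _ = ∑ j, c j • B (u (i.succAbove j)) (v i) +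
          ∑ j, B (u (i.succAbove j)) (v (i.succAbove j)) := by
      simp only [← hc, map_sum, map_smul, LinearMap.sum_apply, LinearMap.smul_apply]
    _ = ∑ j, B (u (i.succAbove j)) (v (i.succAbove j) + c j • v i) := by
      simp only [map_add, map_smul, Finset.sum_add_distrib, add_comm]

theorem exists_not_linearIndependent_of_lt [Nontrivial R] {p q : ℕ} {u : Fin q → U} {v : Fin q → V}
    (h : IsBilinDecomposition B S T e u v) (hqp : q < p) :
    ∃ (u' : Fin p → U) (v' : Fin p → V),
      IsBilinDecomposition B S T e u' v' ∧ ¬LinearIndependent R u' := by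
  obtain ⟨r, rfl⟩ := Nat.exists_eq_add_of_lt hqp
  exact ⟨_, _, h.append_zero (r + 1), fun hu ↦ hu.ne_zero (Fin.natAdd q 0) (by simp)⟩

end CommSemiring

section Field

variable {K U V E : Type*} [Field K] [AddCommGroup U] [AddCommMonoid V] [AddCommMonoid E]
  [Module K U] [Module K V] [Module K E] {B : U →ₗ[K] V →ₗ[K] E}
  {S : Submodule K U} {T : Submodule K V} {e : E}

theorem linearIndependent_left_of_minimal {p : ℕ} {u : Fin p → U} {v : Fin p → V}
    (h : IsBilinDecomposition B S T e u v)
    (hmin : ∀ (q : ℕ) (u' : Fin q → U) (v' : Fin q → V),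
      IsBilinDecomposition B S T e u' v' → p ≤ q) :
    LinearIndependent K u := by
  by_contra hu
  cases p with
  | zero => exact hu linearIndependent_empty_type
  | succ n =>
    obtain ⟨i, c, hc⟩ := exists_sum_smul_succAbove_eq_of_not_linearIndependent hu
    exact n.not_succ_le_self (hmin n _ _ (h.succAbove_of_sum_smul_eq hc))

end Field

end IsBilinDecomposition

theorem minimal_iff_linearIndependent_general {K U V E : Type*} [Field K] [AddCommGroup U]
    [AddCommGroup V] [AddCommMonoid E] [Module K U] [Module K V] [Module K E]
    (B : U →ₗ[K] V →ₗ[K] E) (S : Submodule K U) (T : Submodule K V) (e : E) (p : ℕ) :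
    (∀ (q : ℕ) (u : Fin q → U) (v : Fin q → V), IsBilinDecomposition B S T e u v → p ≤ q) ↔
      ∀ (u : Fin p → U) (v : Fin p → V), IsBilinDecomposition B S T e u v →
        LinearIndependent K u ∧ LinearIndependent K v := by
  refine ⟨fun hmin u v h ↦ ⟨h.linearIndependent_left_of_minimal hmin, ?_⟩, fun hli q u v h ↦ ?_⟩
  · exact h.flip.linearIndependent_left_of_minimal fun q v' u' h' ↦ hmin q u' v' h'.flip
  · by_contra! hqp
    obtain ⟨u', v', h', hu'⟩ := h.exists_not_linearIndependent_of_lt hqp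
    exact hu' (hli u' v' h').1

section Kernel

variable (Ω n R : Type*)

/-- The subspace of symmetric scalar-valued kernels, in the curried form of `IsDecomposition`. -/
def symmetricKernels [Semiring R] : Submodule R (Ω → Ω → R) where
  carrier := {κ | ∀ x y, κ x y = κ y x}
  add_mem' hκ hκ' x y := congrArg₂ (· + ·) (hκ x y) (hκ' x y)
  zero_mem' _ _ := rfl
  smul_mem' c _ hκ x y := congrArg (c * ·) (hκ x y)

/-- The subspace of symmetric matrices, from which the coefficients of a kernel are taken. -/
def symmetricMatrices [Semiring R] : Submodule R (Matrix n n R) where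
  carrier := {A | A.IsSymm}
  add_mem' := IsSymm.add
  zero_mem' := isSymm_zero
  smul_mem' c _ hA := hA.smul c

/-- The bilinear map sending a scalar-valued kernel `κ` and a matrix `A` to the separable
matrix-valued kernel `(x, y) ↦ κ x y • A`. -/
def kernelSMul [CommSemiring R] :
    (Ω → Ω → R) →ₗ[R] Matrix n n R →ₗ[R] (Ω → Ω → Matrix n n R) :=
  LinearMap.mk₂ R (fun κ A x y ↦ κ x y • A)
    (fun _ _ _ ↦ funext₂ fun _ _ ↦ add_smul _ _ _)
    (fun _ _ _ ↦ funext₂ fun _ _ ↦ mul_smul _ _ _)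
    (fun _ _ _ ↦ funext₂ fun _ _ ↦ smul_add _ _ _)
    (fun _ _ _ ↦ funext₂ fun _ _ ↦ smul_comm _ _ _)

end Kernel

theorem isDecomposition_iff_isBilinDecomposition {Ω : Type*} {m p : ℕ}
    {k : Ω → Ω → Matrix (Fin m) (Fin m) ℝ} {ks : Fin p → Ω → Ω → ℝ}
    {Q : Fin p → Matrix (Fin m) (Fin m) ℝ} :
    IsDecomposition k ks Q ↔
      IsBilinDecomposition (kernelSMul Ω (Fin m) ℝ) (symmetricKernels Ω ℝ)
        (symmetricMatrices (Fin m) ℝ) k ks Q := by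
  have eq_sum_iff : k = ∑ i, kernelSMul Ω (Fin m) ℝ (ks i) (Q i) ↔
      ∀ x y, k x y = ∑ i, ks i x y • Q i := by
    simp only [funext_iff (f := k), funext_iff (f := k _), Finset.sum_apply, kernelSMul,
      LinearMap.mk₂_apply]
  exact ⟨fun ⟨hks, hQ, hk⟩ ↦ ⟨hks, hQ, eq_sum_iff.2 hk⟩,
    fun ⟨hks, hQ, hk⟩ ↦ ⟨hks, hQ, eq_sum_iff.1 hk⟩⟩

/-- For a separable kernel admitting a decomposition of length `p`, the
length `p` is minimal iff for every decomposition of length `p` both the scalar kernels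
and the matrices form linearly independent families. -/
theorem minimal_iff_linearIndependent {Ω : Type*} [Nonempty Ω] {m p : ℕ}
    (k : Ω → Ω → Matrix (Fin m) (Fin m) ℝ)
    (hker : ∀ x y, k x y = (k y x)ᵀ)
    (hex : ∃ (ks : Fin p → Ω → Ω → ℝ) (Q : Fin p → Matrix (Fin m) (Fin m) ℝ),
      IsDecomposition k ks Q) :
    (∀ (q : ℕ) (ks : Fin q → Ω → Ω → ℝ) (Q : Fin q → Matrix (Fin m) (Fin m) ℝ),
        IsDecomposition k ks Q → p ≤ q) ↔
      (∀ (ks : Fin p → Ω → Ω → ℝ) (Q : Fin p → Matrix (Fin m) (Fin m) ℝ),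
        IsDecomposition k ks Q →
          LinearIndependent ℝ ks ∧ LinearIndependent ℝ Q) := by
  simpa only [isDecomposition_iff_isBilinDecomposition] using
    minimal_iff_linearIndependent_general (kernelSMul Ω (Fin m) ℝ) (symmetricKernels Ω ℝ)
      (symmetricMatrices (Fin m) ℝ) k p
end

section
/- Let k : Ω × Ω → ℝ^{m×m} be a matrix-valued kernel and let (k_i, Q_i)_{i=1}^p and (k̂_j, Q̂_j)_{j=1}^p be two uncoupled decompositions of k of the same length p, where p is minimal (every decomposition of k has length at least p). Then the decomposition is unique up to permutations and scalings: there exist a bijection ι : {1,…,p} → {1,…,p} and nonzero real numbers a_1,…,a_p such that for each i, k_i = a_i · k̂_{ι(i)} and Q̂_{ι(i)} = a_i · Q_i; in particular k_i(x,y) Q_i = k̂_{ι(i)}(x,y) Q̂_{ι(i)} for all x,y ∈ Ω. -/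
open Matrix BigOperators

/-- A family of matrices is uncoupled if the rank of the sum equals the sum of the ranks. -/
def IsUncoupled {m p : ℕ} (Q : Fin p → Matrix (Fin m) (Fin m) ℝ) : Prop :=
  (∑ i, Q i).rank = ∑ i, (Q i).rank

/-!
If the ranks of the `Q i` add up, then their ranges are independent, so the rank of a linear
combination `∑ i, c i • Q i` is the sum of the ranks of those `Q i` with `c i ≠ 0`. Let `Q'` be a
second such family inside the span of `Q`, with coefficient matrix `C`. Evaluating
`∑ j, (Q' j).rank = (∑ j, Q' j).rank` by this formula counts `(Q i).rank` once for every nonzero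
entry in column `i` of `C` on the left and at most once on the right. So every column of `C` has at
most one nonzero entry, and since no row vanishes, a square `C` is a permutation matrix up to
scaling.

The minimal length of a decomposition of `k` is the dimension of the span of the values of `k`, so
minimality forces each of the two families to be a basis of that span.
-/

open Module

theorem iSupIndep_of_sum_finrank_le_finrank_iSup {K V ι : Type*} [DivisionRing K]
    [AddCommGroup V] [Module K V] [Fintype ι] {U : ι → Submodule K V}
    [∀ i, FiniteDimensional K (U i)]
    (h : ∑ i, finrank K (U i) ≤ finrank K ↥(⨆ i, U i)) : iSupIndep U := by
  classical
  let F : (Π₀ i, U i) →ₗ[K] V := DFinsupp.lsum ℕ fun i => (U i).subtype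
  have finrank_domain : finrank K (Π₀ i, U i) = ∑ i, finrank K (U i) :=
    finrank_directSum K fun i => U i
  have finrank_range : finrank K F.range = finrank K ↥(⨆ i, U i) := by
    rw [Submodule.iSup_eq_range_dfinsupp_lsum]
  have rank_nullity := F.finrank_range_add_finrank_ker
  have ker_eq_bot : F.ker = ⊥ := Submodule.finrank_eq_zero.mp (by lia)
  exact iSupIndep_of_dfinsupp_lsum_injective U (LinearMap.ker_eq_bot.mp ker_eq_bot)

theorem linearIndependent_and_span_eq_of_card_le_finrank {K V X ι : Type*} [DivisionRing K]
    [AddCommGroup V] [Module K V] [Fintype ι] {f : X → V} {c : ι → X → K} {v : ι → V}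
    (hf : ∀ x, f x = ∑ i, c i x • v i)
    (hcard : Fintype.card ι ≤ finrank K (Submodule.span K (Set.range f))) :
    LinearIndependent K v ∧
      Submodule.span K (Set.range v) = Submodule.span K (Set.range f) := by
  have : FiniteDimensional K (Submodule.span K (Set.range v)) :=
    .span_of_finite K (Set.finite_range v)
  have span_le : Submodule.span K (Set.range f) ≤ Submodule.span K (Set.range v) :=
    Submodule.span_le.mpr <| Set.range_subset_iff.mpr fun x =>
      (Submodule.mem_span_range_iff_exists_fun K).mpr ⟨(c · x), (hf x).symm⟩
  have finrank_span_le : finrank K (Submodule.span K (Set.range v)) ≤ Fintype.card ι :=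
    finrank_range_le_card v
  exact ⟨linearIndependent_iff_card_le_finrank_span.mpr
      (hcard.trans (Submodule.finrank_mono span_le)),
    (Submodule.eq_of_le_of_finrank_le span_le (finrank_span_le.trans hcard)).symm⟩

section Rank

variable {K m n ι : Type*} [Field K] [Fintype n]

theorem matrix_rank_eq_zero_iff {A : Matrix m n K} : A.rank = 0 ↔ A = 0 := by
  have : FiniteDimensional K (Submodule.span K (Set.range A.col)) :=
    .span_of_finite K (Set.finite_range A.col)
  rw [rank_eq_finrank_span_cols, Submodule.finrank_eq_zero, Submodule.span_eq_bot,
    Set.forall_mem_range]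
  exact ⟨fun h => Matrix.ext fun i j => congrFun (h j) i, fun h j => by rw [h]; rfl⟩

theorem matrix_rank_eq_of_mulVec_eq_zero_iff {A B : Matrix m n K}
    (h : ∀ x, A *ᵥ x = 0 ↔ B *ᵥ x = 0) : A.rank = B.rank := by
  have ker_eq : A.mulVecLin.ker = B.mulVecLin.ker := Submodule.ext h
  have rank_nullity_A := A.mulVecLin.finrank_range_add_finrank_ker
  have rank_nullity_B := B.mulVecLin.finrank_range_add_finrank_ker
  rw [ker_eq] at rank_nullity_A
  exact Nat.add_right_cancel (rank_nullity_A.trans rank_nullity_B.symm)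

theorem matrix_rank_add_le (A B : Matrix m n K) : (A + B).rank ≤ A.rank + B.rank := by
  unfold Matrix.rank
  rw [mulVecLin_add]
  exact (Submodule.finrank_mono (LinearMap.range_add_le _ _)).trans
    (Submodule.finrank_add_le_finrank_add_finrank _ _)

theorem matrix_rank_sum_le (s : Finset ι) (Q : ι → Matrix m n K) :
    (∑ i ∈ s, Q i).rank ≤ ∑ i ∈ s, (Q i).rank :=
  Finset.le_sum_of_subadditive (fun A : Matrix m n K => A.rank) rank_zero.le
    matrix_rank_add_le s Q

end Rank

/-- Additivity of the rank on a finite family of matrices over a field. This is `IsUncoupled`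
for rectangular matrices over an arbitrary field and an arbitrary finite index type. -/
def IsRankAdditive {K m n ι : Type*} [Field K] [Fintype n] [Fintype ι]
    (Q : ι → Matrix m n K) : Prop :=
  (∑ i, Q i).rank = ∑ i, (Q i).rank

namespace IsRankAdditive

variable {K m n ι ι' : Type*} [Field K] [Fintype n] [Fintype ι] [Fintype ι']
  {Q : ι → Matrix m n K} {Q' : ι' → Matrix m n K}

theorem iSupIndep_range (hQ : IsRankAdditive Q) :
    iSupIndep fun i => (Q i).mulVecLin.range := by
  have range_sum_le : (∑ i, Q i).mulVecLin.range ≤ ⨆ i, (Q i).mulVecLin.range := by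
    rintro _ ⟨x, rfl⟩
    rw [mulVecLin_apply, sum_mulVec]
    exact Submodule.sum_mem_iSup fun i => ⟨x, rfl⟩
  exact iSupIndep_of_sum_finrank_le_finrank_iSup
    (hQ.symm.trans_le (Submodule.finrank_mono range_sum_le))

theorem rank_finsetSum (hQ : IsRankAdditive Q) (s : Finset ι) :
    (∑ i ∈ s, Q i).rank = ∑ i ∈ s, (Q i).rank := by
  classical
  have rank_le_s := matrix_rank_sum_le s Q
  have rank_le_compl := matrix_rank_sum_le sᶜ Q
  have rank_le_add := matrix_rank_add_le (∑ i ∈ s, Q i) (∑ i ∈ sᶜ, Q i)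
  rw [s.sum_add_sum_compl, hQ, ← s.sum_add_sum_compl] at rank_le_add
  lia

theorem finsetSum_smul_mulVec_eq_zero_iff (hQ : IsRankAdditive Q) {s : Finset ι} {c : ι → K}
    (hc : ∀ i ∈ s, c i ≠ 0) (x : n → K) :
    (∑ i ∈ s, c i • Q i) *ᵥ x = 0 ↔ ∀ i ∈ s, Q i *ᵥ x = 0 := by
  simp only [sum_mulVec, smul_mulVec]
  refine ⟨fun h i hi => ?_, fun h => Finset.sum_eq_zero fun i hi => by rw [h i hi, smul_zero]⟩
  have smul_eq_zero_of_mem :=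
    (iSupIndep_iff_finsetSum_eq_zero_imp_eq_zero _).mp hQ.iSupIndep_range s
      (fun i => c i • Q i *ᵥ x) (fun i _ => Submodule.smul_mem _ _ ⟨x, rfl⟩) h
  exact (smul_eq_zero.mp (smul_eq_zero_of_mem i hi)).resolve_left (hc i hi)

theorem rank_sum_smul [DecidableEq K] (hQ : IsRankAdditive Q) (c : ι → K) :
    (∑ i, c i • Q i).rank = ∑ i with c i ≠ 0, (Q i).rank := by
  have sum_eq_sum_support : ∑ i, c i • Q i = ∑ i with c i ≠ 0, c i • Q i :=
    (Finset.sum_filter_of_ne fun i _ h => left_ne_zero_of_smul h).symm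
  have mulVec_eq_zero_iff (x : n → K) :
      (∑ i with c i ≠ 0, c i • Q i) *ᵥ x = 0 ↔ (∑ i with c i ≠ 0, Q i) *ᵥ x = 0 := by
    have unscaled := hQ.finsetSum_smul_mulVec_eq_zero_iff (s := {i | c i ≠ 0}) (c := 1)
      (fun _ _ => one_ne_zero) x
    simp only [Pi.one_apply, one_smul] at unscaled
    rw [unscaled, hQ.finsetSum_smul_mulVec_eq_zero_iff (by simp)]
  rw [sum_eq_sum_support, matrix_rank_eq_of_mulVec_eq_zero_iff mulVec_eq_zero_iff,
    hQ.rank_finsetSum]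

theorem sum_card_mul_rank_eq [DecidableEq K] (hQ : IsRankAdditive Q) (hQ' : IsRankAdditive Q')
    {C : ι' → ι → K} (hC : ∀ j, ∑ i, C j i • Q i = Q' j) :
    ∑ i, Finset.card {j | C j i ≠ 0} * (Q i).rank =
      ∑ i with ∑ j, C j i ≠ 0, (Q i).rank := by
  calc ∑ i, Finset.card {j | C j i ≠ 0} * (Q i).rank
      = ∑ j, ∑ i with C j i ≠ 0, (Q i).rank := by
        simp only [← smul_eq_mul, ← Finset.sum_const, Finset.sum_filter]
        exact Finset.sum_comm
    _ = ∑ j, (Q' j).rank := by simp only [← hC, hQ.rank_sum_smul]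
    _ = (∑ j, Q' j).rank := hQ'.symm
    _ = (∑ i, (∑ j, C j i) • Q i).rank := by
        simp only [← hC, Finset.sum_smul]
        rw [Finset.sum_comm]
    _ = ∑ i with ∑ j, C j i ≠ 0, (Q i).rank := hQ.rank_sum_smul _

theorem card_coeff_ne_zero_le_one [DecidableEq K] (hQ : IsRankAdditive Q)
    (hQ' : IsRankAdditive Q') {C : ι' → ι → K} (hC : ∀ j, ∑ i, C j i • Q i = Q' j)
    {i : ι} (hi : Q i ≠ 0) : Finset.card {j | C j i ≠ 0} ≤ 1 := by
  have indicator_le (l : ι) : (if ∑ j, C j l ≠ 0 then (Q l).rank else 0) ≤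
      Finset.card {j | C j l ≠ 0} * (Q l).rank := by
    split_ifs with hl
    · obtain ⟨j, -, hj⟩ := Finset.exists_ne_zero_of_sum_ne_zero hl
      exact Nat.le_mul_of_pos_left _ (Finset.card_pos.mpr ⟨j, by simpa using hj⟩)
    · exact Nat.zero_le _
  have sum_eq := hQ.sum_card_mul_rank_eq hQ' hC
  rw [Finset.sum_filter] at sum_eq
  have indicator_eq :=
    (Finset.sum_eq_sum_iff_of_le fun l _ => indicator_le l).mp sum_eq.symm i (Finset.mem_univ i)
  have rank_pos : 0 < (Q i).rank := Nat.pos_of_ne_zero (matrix_rank_eq_zero_iff.not.mpr hi)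
  refine Nat.le_of_mul_le_mul_right ?_ rank_pos
  rw [← indicator_eq, one_mul]
  split_ifs
  · exact le_rfl
  · exact Nat.zero_le _

theorem exists_equiv_eq_smul (hQ : IsRankAdditive Q) (hQ' : IsRankAdditive Q')
    (hQ0 : ∀ i, Q i ≠ 0) (hQ'0 : ∀ j, Q' j ≠ 0)
    (hspan : ∀ j, Q' j ∈ Submodule.span K (Set.range Q))
    (hcard : Fintype.card ι ≤ Fintype.card ι') :
    ∃ (σ : ι ≃ ι') (a : ι → K), (∀ i, a i ≠ 0) ∧ ∀ i, Q' (σ i) = a i • Q i := by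
  classical
  choose C hC using fun j => (Submodule.mem_span_range_iff_exists_fun K).mp (hspan j)
  have column_unique {i j j'} (hj : C j i ≠ 0) (hj' : C j' i ≠ 0) : j = j' :=
    Finset.card_le_one.mp (hQ.card_coeff_ne_zero_le_one hQ' hC (hQ0 i)) j (by simpa using hj)
      j' (by simpa using hj')
  have exists_coeff_ne_zero (j) : ∃ i, C j i ≠ 0 := by
    obtain ⟨i, -, hi⟩ := Finset.exists_ne_zero_of_sum_ne_zero ((hC j).trans_ne (hQ'0 j))
    exact ⟨i, left_ne_zero_of_smul hi⟩
  choose g hg using exists_coeff_ne_zero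
  have g_injective : g.Injective := fun j j' h => column_unique (hg j) (h ▸ hg j')
  have g_bijective : g.Bijective := (Fintype.bijective_iff_injective_and_card g).mpr
    ⟨g_injective, (Fintype.card_le_of_injective g g_injective).antisymm hcard⟩
  have row_unique {j i} (h : C j i ≠ 0) : i = g j := by
    obtain ⟨j', rfl⟩ := g_bijective.surjective i
    rw [column_unique h (hg j')]
  let σ : ι ≃ ι' := (Equiv.ofBijective g g_bijective).symm
  have g_σ (i) : g (σ i) = i := (Equiv.ofBijective g g_bijective).apply_symm_apply i
  refine ⟨σ, fun i => C (σ i) i, fun i => ?_, fun i => ?_⟩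
  · simpa only [g_σ] using hg (σ i)
  · rw [← hC, Fintype.sum_eq_single i]
    intro l hl
    rw [not_ne_iff.mp (mt row_unique ((g_σ i).symm ▸ hl)), zero_smul]

end IsRankAdditive

namespace IsDecomposition

variable {Ω : Type*} {m p : ℕ} {k : Ω → Ω → Matrix (Fin m) (Fin m) ℝ}
  {ks : Fin p → Ω → Ω → ℝ} {Q : Fin p → Matrix (Fin m) (Fin m) ℝ}

theorem kernel_symm (h : IsDecomposition k ks Q) (x y : Ω) : k x y = k y x := by
  obtain ⟨hks, -, hk⟩ := h
  simp only [hk, hks _ x y]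

theorem isSymm_kernel (h : IsDecomposition k ks Q) (x y : Ω) : (k x y).IsSymm := by
  obtain ⟨-, hQ, hk⟩ := h
  simp only [IsSymm, hk, transpose_sum, transpose_smul, (hQ _).eq]

theorem isSymm_of_mem_span (h : IsDecomposition k ks Q) {A : Matrix (Fin m) (Fin m) ℝ}
    (hA : A ∈ Submodule.span ℝ (Set.range (Function.uncurry k))) : A.IsSymm := by
  let symmetric : Submodule ℝ (Matrix (Fin m) (Fin m) ℝ) :=
    LinearMap.eqLocus (transposeLinearEquiv (Fin m) (Fin m) ℝ ℝ).toLinearMap LinearMap.id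
  have span_le : Submodule.span ℝ (Set.range (Function.uncurry k)) ≤ symmetric :=
    Submodule.span_le.mpr (Set.range_subset_iff.mpr fun t => h.isSymm_kernel t.1 t.2)
  exact span_le hA

theorem exists_of_length_finrank_span (h : IsDecomposition k ks Q) :
    ∃ c B, IsDecomposition (p := finrank ℝ (Submodule.span ℝ (Set.range (Function.uncurry k))))
      k c B := by
  let b := finBasis ℝ (Submodule.span ℝ (Set.range (Function.uncurry k)))
  let value (x y : Ω) : Submodule.span ℝ (Set.range (Function.uncurry k)) :=
    ⟨k x y, Submodule.subset_span ⟨(x, y), rfl⟩⟩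
  have value_symm (x y) : value x y = value y x := Subtype.ext (h.kernel_symm x y)
  refine ⟨fun i x y => b.repr (value x y) i, fun i => b i,
    fun i x y => by simp only [value_symm x y], fun i => h.isSymm_of_mem_span (b i).2,
    fun x y => ?_⟩
  calc k x y
      = ((∑ i, b.repr (value x y) i • b i : Submodule.span ℝ _) : Matrix _ _ ℝ) :=
        congrArg Subtype.val (b.sum_repr (value x y)).symm
    _ = ∑ i, b.repr (value x y) i • (b i : Matrix _ _ ℝ) := Submodule.coe_sum _ _ _

end IsDecomposition

theorem coeff_eq_smul_of_sum_smul_eq {R V ι ι' X : Type*} [CommSemiring R] [AddCommMonoid V]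
    [Module R V] [Fintype ι] [Fintype ι'] {v : ι → V} {v' : ι' → V} (hv : LinearIndependent R v)
    {c : ι → X → R} {c' : ι' → X → R} (h : ∀ x, ∑ i, c i x • v i = ∑ j, c' j x • v' j)
    {σ : ι ≃ ι'} {a : ι → R} (hσ : ∀ i, v' (σ i) = a i • v i) (i : ι) :
    c i = a i • c' (σ i) := by
  funext x
  refine Fintype.linearIndependent_iffₛ.mp hv (c · x) (fun i => a i • c' (σ i) x) ?_ i
  simp only [h, ← σ.sum_comp, hσ, smul_smul, smul_eq_mul, mul_comm]

theorem uncoupled_decomposition_unique_general {K X m n ι ι' : Type*} [Field K] [Fintype n]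
    [Fintype ι] [Fintype ι'] {k : X → Matrix m n K}
    {ks : ι → X → K} {Q : ι → Matrix m n K} {ks' : ι' → X → K} {Q' : ι' → Matrix m n K}
    (hk : ∀ x, k x = ∑ i, ks i x • Q i) (hk' : ∀ x, k x = ∑ j, ks' j x • Q' j)
    (hQ : IsRankAdditive Q) (hQ' : IsRankAdditive Q')
    (hmin : Fintype.card ι ≤ finrank K (Submodule.span K (Set.range k)))
    (hmin' : Fintype.card ι' ≤ finrank K (Submodule.span K (Set.range k))) :
    ∃ (σ : ι ≃ ι') (a : ι → K), (∀ i, a i ≠ 0) ∧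
      ∀ i, ks i = a i • ks' (σ i) ∧ Q' (σ i) = a i • Q i := by
  obtain ⟨hQ_indep, hQ_span⟩ :=
    linearIndependent_and_span_eq_of_card_le_finrank hk hmin
  obtain ⟨hQ'_indep, hQ'_span⟩ :=
    linearIndependent_and_span_eq_of_card_le_finrank hk' hmin'
  have hQ'_mem (j) : Q' j ∈ Submodule.span K (Set.range Q) := by
    rw [hQ_span, ← hQ'_span]
    exact Submodule.subset_span (Set.mem_range_self j)
  have card_le : Fintype.card ι ≤ Fintype.card ι' := by
    rw [← finrank_span_eq_card hQ'_indep, hQ'_span]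
    exact hmin
  obtain ⟨σ, a, ha, hσ⟩ :=
    hQ.exists_equiv_eq_smul hQ' hQ_indep.ne_zero hQ'_indep.ne_zero hQ'_mem card_le
  exact ⟨σ, a, ha, fun i =>
    ⟨coeff_eq_smul_of_sum_smul_eq hQ_indep (fun x => (hk x).symm.trans (hk' x)) hσ i, hσ i⟩⟩

/-- Uncoupled decompositions of minimal length are unique up to
permutations and scalings. -/
theorem uncoupled_decomposition_unique {Ω : Type*} [Nonempty Ω] {m p : ℕ}
    (k : Ω → Ω → Matrix (Fin m) (Fin m) ℝ)
    (hker : ∀ x y, k x y = (k y x)ᵀ)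
    (ks : Fin p → Ω → Ω → ℝ) (Q : Fin p → Matrix (Fin m) (Fin m) ℝ)
    (ks' : Fin p → Ω → Ω → ℝ) (Q' : Fin p → Matrix (Fin m) (Fin m) ℝ)
    (h1 : IsDecomposition k ks Q) (h2 : IsDecomposition k ks' Q')
    (hu1 : IsUncoupled Q) (hu2 : IsUncoupled Q')
    (hmin : ∀ (q : ℕ) (ks'' : Fin q → Ω → Ω → ℝ)
        (Q'' : Fin q → Matrix (Fin m) (Fin m) ℝ),
        IsDecomposition k ks'' Q'' → p ≤ q) :
    ∃ (ι : Equiv.Perm (Fin p)) (a : Fin p → ℝ), (∀ i, a i ≠ 0) ∧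
      ∀ i, ks i = (fun x y => a i * ks' (ι i) x y) ∧ Q' (ι i) = a i • Q i ∧
        ∀ x y, ks i x y • Q i = ks' (ι i) x y • Q' (ι i) := by
  obtain ⟨c, B, hB⟩ := h1.exists_of_length_finrank_span
  have card_le := (Fintype.card_fin p).trans_le (hmin _ c B hB)
  obtain ⟨σ, a, ha, hσ⟩ := uncoupled_decomposition_unique_general
    (ks := fun i => Function.uncurry (ks i)) (ks' := fun j => Function.uncurry (ks' j))
    (fun t => h1.2.2 t.1 t.2) (fun t => h2.2.2 t.1 t.2) hu1 hu2 card_le card_le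
  have hks (i x y) : ks i x y = a i * ks' (σ i) x y := congrFun (hσ i).1 (x, y)
  refine ⟨σ, a, ha, fun i => ⟨funext₂ (hks i), (hσ i).2, fun x y => ?_⟩⟩
  rw [hks, (hσ i).2, smul_smul, mul_comm]
end

section
/- Let k : Ω × Ω → ℝ^{m×m} be a matrix-valued kernel such that additionally k(x,y) = k(y,x) for all x,y ∈ Ω (so each value k(x,y) is a symmetric matrix). Then the following are equivalent: (i) k(x,y) k(x̃,ỹ) = k(x̃,ỹ) k(x,y) for all x,y,x̃,ỹ ∈ Ω; (ii) there exists an orthogonal matrix P ∈ ℝ^{m×m} such that Pᵀ k(x,y) P is a diagonal matrix for all x,y ∈ Ω; (iii) there exist p ≤ m and an uncoupled decomposition (k_i, Q_i)_{i=1}^p of k such that Q_i Q_j = 0 for all i ≠ j. -/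
open Matrix BigOperators

/-! Commuting symmetric matrices share an orthonormal basis of eigenvectors, and the orthogonal
projections onto the lines spanned by these vectors are symmetric, annihilate each other and
decompose every matrix of the family. Their ranks add up because each of them has rank one and
their sum is the identity. Conversely, linear combinations of pairwise annihilating matrices
commute. -/

open Module Module.End Unitary
open scoped Function

section SimultaneousDiagonalization

variable {ι 𝕜 : Type*} [RCLike 𝕜]

theorem exists_orthonormalBasis_forall_apply_eq_smul {E : Type*} [NormedAddCommGroup E]
    [InnerProductSpace 𝕜 E] [FiniteDimensional 𝕜 E] {d : ℕ} (hd : finrank 𝕜 E = d)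
    {T : ι → E →ₗ[𝕜] E} (hT : ∀ i, (T i).IsSymmetric) (hcomm : Pairwise (Commute on T)) :
    ∃ (b : OrthonormalBasis (Fin d) 𝕜 E) (χ : Fin d → ι → 𝕜), ∀ i j, T i (b j) = χ j i • b j := by
  classical
  let V : (ι → 𝕜) → Submodule 𝕜 E := fun χ => ⨅ i, eigenspace (T i) (χ i)
  have hV : DirectSum.IsInternal V :=
    LinearMap.IsSymmetric.directSum_isInternal_of_pairwise_commute hT hcomm
  have hV_orthogonal : OrthogonalFamily 𝕜 (fun χ => V χ) fun χ => (V χ).subtypeₗᵢ :=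
    LinearMap.IsSymmetric.orthogonalFamily_iInf_eigenspaces hT
  -- A subordinate basis requires finitely many summands, so the trivial eigenspaces are dropped.
  have : Fintype {χ // V χ ≠ ⊥} :=
    (WellFoundedGT.finite_ne_bot_of_iSupIndep hV.submodule_iSupIndep).fintype
  have hV_ne_bot := DirectSum.isInternal_ne_bot_iff.mpr hV
  have hV_ne_bot_orthogonal := hV_orthogonal.comp (Subtype.val_injective (p := fun χ => V χ ≠ ⊥))
  refine ⟨hV_ne_bot.subordinateOrthonormalBasis hd hV_ne_bot_orthogonal,
    fun j => (hV_ne_bot.subordinateOrthonormalBasisIndex hd j hV_ne_bot_orthogonal).1,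
    fun i j => ?_⟩
  have hmem := hV_ne_bot.subordinateOrthonormalBasis_subordinate hd j hV_ne_bot_orthogonal
  exact mem_eigenspace_iff.mp ((Submodule.mem_iInf _).mp hmem i)

variable {n : Type*} [Fintype n] [DecidableEq n]

theorem mul_toMatrix_eq_toMatrix_mul_diagonal {κ : Type*} [Fintype κ] [DecidableEq κ]
    {A : Matrix n n 𝕜} {v : κ → EuclideanSpace 𝕜 n} {μ : κ → 𝕜}
    (hv : ∀ j, toEuclideanLin A (v j) = μ j • v j) :
    A * (EuclideanSpace.basisFun n 𝕜).toBasis.toMatrix v =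
      (EuclideanSpace.basisFun n 𝕜).toBasis.toMatrix v * diagonal μ := by
  ext r j
  rw [mul_diagonal, mul_comm]
  simpa [Matrix.mul_apply, mulVec, dotProduct, Basis.toMatrix_apply] using congr($(hv j) r)

theorem exists_unitaryGroup_forall_isDiag {A : ι → Matrix n n 𝕜}
    (hA : ∀ i, (A i).IsHermitian) (hcomm : Pairwise (Commute on A)) :
    ∃ U : unitaryGroup n 𝕜, ∀ i, (star (U : Matrix n n 𝕜) * A i * U).IsDiag := by
  have hT_comm : Pairwise (Commute on fun i => toEuclideanLin (A i)) := fun i j hij =>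
    (hcomm hij).map (toLpLinAlgEquiv 2)
  obtain ⟨b, χ, hχ⟩ := exists_orthonormalBasis_forall_apply_eq_smul finrank_euclideanSpace
    (fun i => isSymmetric_toEuclideanLin_iff.mpr (hA i)) hT_comm
  let b' : OrthonormalBasis n 𝕜 (EuclideanSpace 𝕜 n) := b.reindex (Fintype.equivFin n).symm
  have hb' (i j) : toEuclideanLin (A i) (b' j) = χ (Fintype.equivFin n j) i • b' j := by
    simpa only [b', OrthonormalBasis.reindex_apply, Equiv.symm_symm] using hχ i _
  refine ⟨⟨_, (EuclideanSpace.basisFun n 𝕜).toMatrix_orthonormalBasis_mem_unitary b'⟩,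
    fun i => ?_⟩
  rw [mul_assoc, mul_toMatrix_eq_toMatrix_mul_diagonal (hb' i), ← mul_assoc,
    coe_star_mul_self, one_mul]
  exact isDiag_diagonal _

theorem exists_orthogonal_forall_isDiag {A : ι → Matrix n n ℝ}
    (hA : ∀ i, (A i).IsSymm) (hcomm : Pairwise (Commute on A)) :
    ∃ P : Matrix n n ℝ, Pᵀ * P = 1 ∧ ∀ i, (Pᵀ * A i * P).IsDiag := by
  obtain ⟨U, hU⟩ := exists_unitaryGroup_forall_isDiag
    (fun i => isHermitian_iff_isSymm.mpr (hA i)) hcomm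
  simp only [star_eq_conjTranspose, conjTranspose_eq_transpose_of_trivial] at hU
  exact ⟨U, mem_unitaryGroup_iff'.mp U.2, hU⟩

end SimultaneousDiagonalization

section ColumnProj

variable {n R : Type*} [Fintype n] [DecidableEq n] [CommRing R] [StarRing R]

theorem rank_conjStarAlgAut (U : unitaryGroup n R) (A : Matrix n n R) :
    (conjStarAlgAut R _ U A).rank = A.rank := by
  have hU : IsUnit (U : Matrix n n R).det := UnitaryGroup.det_isUnit U
  have hU' : IsUnit (star (U : Matrix n n R)).det := UnitaryGroup.det_isUnit (star U)
  rw [conjStarAlgAut_apply, rank_mul_eq_left_of_isUnit_det _ _ hU',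
    rank_mul_eq_right_of_isUnit_det _ _ hU]

theorem rank_single_self {K : Type*} [Field K] {c : K} (hc : c ≠ 0) (i : n) :
    (single i i c).rank = 1 := by
  classical
  rw [← diagonal_single, rank_diagonal, Fintype.card_eq_one_iff]
  refine ⟨⟨i, by simpa using hc⟩, fun ⟨j, hj⟩ => Subtype.ext ?_⟩
  by_contra hji
  exact hj (Pi.single_eq_of_ne (M := fun _ => K) hji c)

/-- The orthogonal projection `uᵢ uᵢ*` onto the line spanned by the `i`-th column `uᵢ` of a unitary
matrix `U`, written as the conjugate of the matrix unit `Eᵢᵢ` by `U`. -/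
def columnProj (U : unitaryGroup n R) (i : n) : Matrix n n R :=
  conjStarAlgAut R _ U (single i i 1)

variable (U : unitaryGroup n R)

theorem isHermitian_columnProj (i : n) : (columnProj U i).IsHermitian := by
  rw [columnProj, IsHermitian, ← star_eq_conjTranspose, ← map_star]
  simp [star_eq_conjTranspose]

theorem columnProj_mul_columnProj_of_ne {i j : n} (hij : i ≠ j) :
    columnProj U i * columnProj U j = 0 := by
  rw [columnProj, columnProj, ← map_mul, single_mul_single_of_ne (h := hij), map_zero]

theorem sum_smul_columnProj (d : n → R) :
    ∑ i, d i • columnProj U i = conjStarAlgAut R _ U (diagonal d) := by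
  simp only [columnProj, ← map_smul, ← map_sum, smul_single, smul_eq_mul, mul_one,
    sum_single_eq_diagonal]

theorem sum_columnProj : ∑ i, columnProj U i = 1 := by
  simpa using sum_smul_columnProj U 1

theorem rank_columnProj {K : Type*} [Field K] [StarRing K] (U : unitaryGroup n K) (i : n) :
    (columnProj U i).rank = 1 := by
  rw [columnProj, rank_conjStarAlgAut, rank_single_self one_ne_zero]

variable {U}

theorem eq_sum_smul_columnProj_of_isDiag {A : Matrix n n R}
    (hA : (star (U : Matrix n n R) * A * U).IsDiag) :
    A = ∑ i, (star (U : Matrix n n R) * A * U).diag i • columnProj U i := by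
  rw [sum_smul_columnProj, hA.diagonal_diag, ← conjStarAlgAut_symm_apply (S := R),
    StarAlgEquiv.apply_symm_apply]

end ColumnProj

section Kernel

variable {Ω : Type*} {m : ℕ} {k : Ω → Ω → Matrix (Fin m) (Fin m) ℝ}

theorem IsDecomposition.commute {p : ℕ} {ks : Fin p → Ω → Ω → ℝ}
    {Q : Fin p → Matrix (Fin m) (Fin m) ℝ} (hk : IsDecomposition k ks Q)
    (hQ : ∀ i j, i ≠ j → Q i * Q j = 0) (x y x' y' : Ω) : Commute (k x y) (k x' y') := by
  have hQ_comm (i j) : Commute (Q i) (Q j) := by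
    obtain rfl | hij := eq_or_ne i j
    · exact Commute.refl _
    · exact (hQ i j hij).trans (hQ j i hij.symm).symm
  rw [hk.2.2 x y, hk.2.2 x' y']
  exact Commute.sum_left _ _ _ fun i _ => Commute.sum_right _ _ _ fun j _ =>
    ((hQ_comm i j).smul_left _).smul_right _

theorem isDecomposition_columnProj (hsymm : ∀ x y, k x y = k y x)
    {U : orthogonalGroup (Fin m) ℝ}
    (hU : ∀ x y, (star (U : Matrix (Fin m) (Fin m) ℝ) * k x y * U).IsDiag) :
    IsDecomposition k
      (fun i x y => (star (U : Matrix (Fin m) (Fin m) ℝ) * k x y * U).diag i) (columnProj U) :=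
  ⟨fun i x y => by simp only [hsymm x y],
    fun i => isHermitian_iff_isSymm.mp (isHermitian_columnProj U i),
    fun x y => eq_sum_smul_columnProj_of_isDiag (hU x y)⟩

theorem isUncoupled_columnProj (U : orthogonalGroup (Fin m) ℝ) : IsUncoupled (columnProj U) := by
  simp [IsUncoupled, sum_columnProj, rank_columnProj]

theorem exists_isDecomposition_isUncoupled_of_isDiag (hsymm : ∀ x y, k x y = k y x)
    {P : Matrix (Fin m) (Fin m) ℝ} (hP : Pᵀ * P = 1) (hdiag : ∀ x y, (Pᵀ * k x y * P).IsDiag) :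
    ∃ p ≤ m, ∃ (ks : Fin p → Ω → Ω → ℝ) (Q : Fin p → Matrix (Fin m) (Fin m) ℝ),
      IsDecomposition k ks Q ∧ IsUncoupled Q ∧ ∀ i j, i ≠ j → Q i * Q j = 0 := by
  let U : orthogonalGroup (Fin m) ℝ := ⟨P, mem_unitaryGroup_iff'.mpr hP⟩
  exact ⟨m, le_rfl, _, columnProj U, isDecomposition_columnProj hsymm hdiag,
    isUncoupled_columnProj U, fun _ _ => columnProj_mul_columnProj_of_ne U⟩

end Kernel

/-- Characterization of matrix-valued kernels with pairwise commuting
values: commutation of all values ↔ simultaneous diagonalizability by one orthogonal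
matrix ↔ existence of an uncoupled decomposition of length `p ≤ m` with pairwise
annihilating matrices. -/
theorem commuting_kernel_characterization {Ω : Type*} [Nonempty Ω] {m : ℕ}
    (k : Ω → Ω → Matrix (Fin m) (Fin m) ℝ)
    (hker : ∀ x y, k x y = (k y x)ᵀ)
    (hsymm : ∀ x y, k x y = k y x) :
    ((∀ x y x' y', k x y * k x' y' = k x' y' * k x y) ↔
      (∃ P : Matrix (Fin m) (Fin m) ℝ, Pᵀ * P = 1 ∧ ∀ x y, (Pᵀ * k x y * P).IsDiag)) ∧
    ((∀ x y x' y', k x y * k x' y' = k x' y' * k x y) ↔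
      (∃ (p : ℕ), p ≤ m ∧ ∃ (ks : Fin p → Ω → Ω → ℝ)
          (Q : Fin p → Matrix (Fin m) (Fin m) ℝ),
        IsDecomposition k ks Q ∧ IsUncoupled Q ∧
          ∀ i j, i ≠ j → Q i * Q j = 0)) := by
  have hk_symm (x y : Ω) : (k x y).IsSymm := (hker y x).symm.trans (hsymm y x)
  have diag_of_comm (h : ∀ x y x' y', k x y * k x' y' = k x' y' * k x y) :=
    exists_orthogonal_forall_isDiag (A := fun z : Ω × Ω => k z.1 z.2)
      (fun z => hk_symm z.1 z.2) (fun z w _ => h z.1 z.2 w.1 w.2)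
  refine ⟨⟨fun h => ?_, ?_⟩, fun h => ?_, ?_⟩
  · obtain ⟨P, hP, hdiag⟩ := diag_of_comm h
    exact ⟨P, hP, fun x y => hdiag (x, y)⟩
  · rintro ⟨P, hP, hdiag⟩
    obtain ⟨p, -, ks, Q, hk, -, hQ⟩ := exists_isDecomposition_isUncoupled_of_isDiag hsymm hP hdiag
    exact hk.commute hQ
  · obtain ⟨P, hP, hdiag⟩ := diag_of_comm h
    exact exists_isDecomposition_isUncoupled_of_isDiag hsymm hP fun x y => hdiag (x, y)
  · rintro ⟨p, -, ks, Q, hk, -, hQ⟩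
    exact hk.commute hQ
end

section
/- Let k : Ω × Ω → ℝ^{m×m} be a positive definite matrix-valued kernel satisfying k(x,y) = k(y,x) for all x,y ∈ Ω, and suppose that k(x,y) k(x̃,ỹ) = k(x̃,ỹ) k(x,y) for all x,y,x̃,ỹ ∈ Ω. Then for every n ∈ ℕ the pointwise matrix power kⁿ, defined by kⁿ(x,y) := (k(x,y))ⁿ, is a positive definite matrix-valued kernel. -/
open Matrix BigOperators

/-!
A kernel is positive definite iff its Gram block matrices `K = (k (x a) (x b))` are positive
semidefinite. The square root `S` of such a `K` lies in the double commutant of `K`, so every matrix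
commuting with all the blocks of `K` also commutes with all the blocks of `S`. Hence, if the blocks
of `K = S * Sᴴ` commute with those of `L = T * Tᴴ`, then the blocks of `S` commute with those of
`T`, and the blockwise product of `K` and `L` factors as `R * Rᴴ`, where `R` has the blocks
`R a (c, d) = S a c * T a d`. Powers of a kernel with commuting values follow by induction.
-/

open scoped ComplexOrder MatrixOrder

section FaceSplitting

variable {ι κ μ A : Type*}

/-- The face-splitting product (row-wise Kronecker product) of two matrices with the same rows. It
factors the Hadamard product of two Gram matrices. -/
def faceSplittingProduct [Mul A] (S : Matrix ι κ A) (T : Matrix ι μ A) : Matrix ι (κ × μ) A :=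
  of fun a p => S a p.1 * T a p.2

lemma faceSplittingProduct_mul_conjTranspose [Fintype κ] [Fintype μ] [NonUnitalSemiring A]
    [StarRing A] {S : Matrix ι κ A} {T : Matrix ι μ A}
    (hST : ∀ a c b d, Commute (S a c) (T b d))
    (hST_star : ∀ a c b d, Commute (star (S a c)) (T b d)) :
    faceSplittingProduct S T * (faceSplittingProduct S T)ᴴ = (S * Sᴴ) ⊙ (T * Tᴴ) := by
  ext a b
  have hterm (c : κ) (d : μ) : S a c * T a d * star (S b c * T b d) =
      S a c * star (S b c) * (T a d * star (T b d)) := by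
    rw [(hST b c b d).eq, star_mul, mul_assoc, ← mul_assoc (T a d),
      ← (hST_star b c a d).eq]
    simp only [mul_assoc]
  simp only [faceSplittingProduct, hadamard_apply, mul_apply, conjTranspose_apply, of_apply,
    Fintype.sum_prod_type, hterm, Finset.sum_mul_sum]

end FaceSplitting

section BlockMatrix

variable {ι κ m n R 𝕜 : Type*}

lemma comp_mul [Fintype κ] [Fintype m] [NonUnitalNonAssocSemiring R]
    (M : Matrix ι κ (Matrix m m R)) (N : Matrix κ n (Matrix m m R)) :
    comp ι n m m R (M * N) = comp ι κ m m R M * comp κ n m m R N := by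
  ext ⟨a, i⟩ ⟨b, j⟩
  simp [mul_apply, Matrix.sum_apply, Fintype.sum_prod_type]

lemma commute_diagonal_const_iff [Fintype ι] [DecidableEq ι] [NonUnitalNonAssocSemiring R] {X : R}
    {M : Matrix ι ι R} :
    Commute (diagonal fun _ => X) M ↔ ∀ a b, Commute X (M a b) := by
  simp only [commute_iff_eq, ← Matrix.ext_iff, diagonal_mul, mul_diagonal]

lemma star_dotProduct_comp_mulVec [Fintype ι] [Fintype m] [NonUnitalSemiring R] [Star R]
    (K : Matrix ι ι (Matrix m m R)) (v : ι × m → R) :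
    star v ⬝ᵥ comp ι ι m m R K *ᵥ v =
      ∑ a, ∑ b, star (fun i => v (a, i)) ⬝ᵥ K a b *ᵥ fun j => v (b, j) := by
  simp only [dotProduct, mulVec, Fintype.sum_prod_type, Finset.mul_sum, comp_apply, Pi.star_apply]
  exact Finset.sum_congr rfl fun a _ => Finset.sum_comm

lemma posSemidef_comp_mul_conjTranspose [Finite ι] [Fintype κ] [Fintype m] [Ring R]
    [PartialOrder R] [StarRing R] [StarOrderedRing R] (M : Matrix ι κ (Matrix m m R)) :
    (comp ι ι m m R (M * Mᴴ)).PosSemidef := by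
  rw [comp_mul, ← conjTranspose_comp']
  exact posSemidef_self_mul_conjTranspose _

variable [RCLike 𝕜] [Fintype m]

lemma exists_sqrt_of_posSemidef_comp [Fintype ι] {K : Matrix ι ι (Matrix m m 𝕜)}
    (hK : (comp ι ι m m 𝕜 K).PosSemidef) :
    ∃ S : Matrix ι ι (Matrix m m 𝕜), S.IsHermitian ∧ S * Sᴴ = K ∧
      ∀ X, (∀ a b, Commute X (K a b)) → ∀ a b, Commute X (S a b) := by
  classical
  let e := compRingEquiv ι m 𝕜
  let S := e.symm (CFC.sqrt (e K))
  have heS : e S = CFC.sqrt (e K) := e.apply_symm_apply _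
  have hS : S.IsHermitian :=
    isHermitian_comp_iff.1 (heS ▸ (CFC.sqrt_nonneg (e K)).posSemidef.isHermitian)
  refine ⟨S, hS, ?_, fun X hX => ?_⟩
  · rw [hS]
    apply e.injective
    rw [map_mul, heS, CFC.sqrt_mul_sqrt_self (e K) hK.nonneg]
  · have hcomm : Commute (e K) (e (diagonal fun _ => X)) :=
      (commute_diagonal_const_iff.2 hX).symm.map e
    have hcomm_sqrt : Commute (e S) (e (diagonal fun _ => X)) := by
      rw [heS]
      exact hcomm.cfcₙ_nnreal _
    exact commute_diagonal_const_iff.1 (Commute.of_map e.injective hcomm_sqrt).symm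

theorem posSemidef_comp_hadamard [Finite ι] {K L : Matrix ι ι (Matrix m m 𝕜)}
    (hK : (comp ι ι m m 𝕜 K).PosSemidef) (hL : (comp ι ι m m 𝕜 L).PosSemidef)
    (hKL : ∀ a b c d, Commute (K a b) (L c d)) :
    (comp ι ι m m 𝕜 (K ⊙ L)).PosSemidef := by
  cases nonempty_fintype ι
  obtain ⟨S, hS, rfl, hS_comm⟩ := exists_sqrt_of_posSemidef_comp hK
  obtain ⟨T, -, rfl, hT_comm⟩ := exists_sqrt_of_posSemidef_comp hL
  have hST (a b c d) : Commute (S a b) (T c d) :=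
    hT_comm _ (fun _ _ => (hS_comm _ (fun _ _ => (hKL _ _ _ _).symm) a b).symm) c d
  have hST_star (a b c d) : Commute (star (S a b)) (T c d) := by
    rw [hS.apply]
    exact hST b a c d
  rw [← faceSplittingProduct_mul_conjTranspose hST hST_star]
  exact posSemidef_comp_mul_conjTranspose _

end BlockMatrix

section Kernel

variable {Ω m 𝕜 : Type*} [RCLike 𝕜] [Fintype m]

/-- Positive definite matrix-valued kernels, over `ℝ` or `ℂ`. As is customary for kernels, the
quadratic forms are only required to be nonnegative, and the points need not be distinct. -/
structure IsPosDefKernel (k : Ω → Ω → Matrix m m 𝕜) : Prop where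
  eq_conjTranspose : ∀ x y, k x y = (k y x)ᴴ
  sum_nonneg : ∀ (N : ℕ) (x : Fin N → Ω) (α : Fin N → m → 𝕜),
    0 ≤ ∑ a, ∑ b, star (α a) ⬝ᵥ k (x a) (x b) *ᵥ α b

lemma isPosDefKernel_iff_posSemidef {k : Ω → Ω → Matrix m m 𝕜} :
    IsPosDefKernel k ↔
      ∀ (N : ℕ) (x : Fin N → Ω), (comp _ _ _ _ 𝕜 ((of k).submatrix x x)).PosSemidef := by
  refine ⟨fun hk N x => .of_dotProduct_mulVec_nonneg ?_ fun v => ?_, fun h => ⟨fun x y => ?_,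
    fun N x α => ?_⟩⟩
  · rw [isHermitian_comp_iff]
    ext1 a b
    exact (hk.eq_conjTranspose _ _).symm
  · rw [star_dotProduct_comp_mulVec]
    exact hk.sum_nonneg N x fun a i => v (a, i)
  · ext i j
    exact ((h 2 ![x, y]).isHermitian.apply (0, i) (1, j)).symm
  · have hnonneg := (h N x).dotProduct_mulVec_nonneg fun p => α p.1 p.2
    rwa [star_dotProduct_comp_mulVec] at hnonneg

namespace IsPosDefKernel

theorem mul {k l : Ω → Ω → Matrix m m 𝕜} (hk : IsPosDefKernel k) (hl : IsPosDefKernel l)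
    (hkl : ∀ x y x' y', Commute (k x y) (l x' y')) :
    IsPosDefKernel fun x y => k x y * l x y := by
  rw [isPosDefKernel_iff_posSemidef] at *
  exact fun N x => posSemidef_comp_hadamard (hk N x) (hl N x) fun _ _ _ _ => hkl _ _ _ _

lemma one [DecidableEq m] : IsPosDefKernel fun _ _ : Ω => (1 : Matrix m m 𝕜) := by
  refine isPosDefKernel_iff_posSemidef.2 fun N x => ?_
  let ones : Matrix (Fin N) Unit (Matrix m m 𝕜) := of fun _ _ => 1
  have hones : (of fun _ _ => 1).submatrix x x = ones * onesᴴ := by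
    ext1 a b
    simp [ones, mul_apply]
  rw [hones]
  exact posSemidef_comp_mul_conjTranspose ones

end IsPosDefKernel

theorem pow_kernel_positive_definite_general [DecidableEq m] {k : Ω → Ω → Matrix m m 𝕜}
    (hk : IsPosDefKernel k) (hcomm : ∀ x y x' y', Commute (k x y) (k x' y')) (n : ℕ) :
    IsPosDefKernel fun x y => k x y ^ n := by
  induction n with
  | zero => simpa only [pow_zero] using IsPosDefKernel.one
  | succ n ih =>
    simpa only [pow_succ] using ih.mul hk fun x y x' y' => (hcomm x y x' y').pow_left n

end Kernel

/-- If `k` is a positive definite matrix-valued kernel with symmetric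
values all of which commute with one another, then the pointwise matrix power `kⁿ`
is a positive definite matrix-valued kernel for every `n ∈ ℕ`. -/
theorem pow_kernel_positive_definite {Ω : Type*} [Nonempty Ω] {m : ℕ}
    (k : Ω → Ω → Matrix (Fin m) (Fin m) ℝ)
    (hker : ∀ x y, k x y = (k y x)ᵀ)
    (hsymm : ∀ x y, k x y = k y x)
    (hpd : ∀ (N : ℕ) (x : Fin N → Ω) (α : Fin N → Fin m → ℝ),
      0 ≤ ∑ a, ∑ b, α a ⬝ᵥ (k (x a) (x b)).mulVec (α b))
    (hcomm : ∀ x y x' y', k x y * k x' y' = k x' y' * k x y)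
    (n : ℕ) :
    (∀ x y, (k x y) ^ n = ((k y x) ^ n)ᵀ) ∧
      ∀ (N : ℕ) (x : Fin N → Ω) (α : Fin N → Fin m → ℝ),
        0 ≤ ∑ a, ∑ b, α a ⬝ᵥ ((k (x a) (x b)) ^ n).mulVec (α b) := by
  have hpow := pow_kernel_positive_definite_general ⟨hker, hpd⟩ hcomm n
  exact ⟨hpow.eq_conjTranspose, hpow.sum_nonneg⟩
end

section
/- Let Q_1,…,Q_p ∈ ℝ^{m×m} be symmetric matrices with rank(Σ_{i=1}^p Q_i) = Σ_{i=1}^p rank(Q_i), and assume Q_1 ≠ 0. Then there exists a vector c ∈ ℝ^m such that Q_1 c ≠ 0 and Q_i c = 0 for every i ∈ {2,…,p}. -/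
open Matrix BigOperators

/-!
The sum `∑ i, Q i` factors through `c ↦ (Q i c)ᵢ`, viewed as a map into the product of the ranges
of the `Q i`. That product has dimension `∑ i, rank (Q i)`, so additivity of the rank forces this
map to be surjective: the values `Q i c` can be prescribed independently of one another.
-/

section

variable {K V W ι : Type*} [DivisionRing K] [AddCommGroup V] [Module K V] [AddCommGroup W]
  [Module K W] [Fintype ι] {f : ι → V →ₗ[K] W} [∀ i, FiniteDimensional K (f i).range]

theorem finrank_range_sum_le_finrank_range_pi_rangeRestrict :
    Module.finrank K (∑ i, f i).range ≤
      Module.finrank K (LinearMap.pi fun i => (f i).rangeRestrict).range := by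
  let addUp : (∀ i, (f i).range) →ₗ[K] W := ∑ i, (f i).range.subtype ∘ₗ LinearMap.proj i
  have sum_factors : ∑ i, f i = addUp ∘ₗ LinearMap.pi fun i => (f i).rangeRestrict := by
    ext v
    simp [addUp]
  rw [sum_factors, LinearMap.range_comp]
  exact Submodule.finrank_map_le _ _

theorem pi_rangeRestrict_surjective_of_finrank_range_sum_eq
    (hrank : Module.finrank K (∑ i, f i).range = ∑ i, Module.finrank K (f i).range) :
    Function.Surjective (LinearMap.pi fun i => (f i).rangeRestrict) := by
  rw [← LinearMap.range_eq_top]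
  refine Submodule.eq_top_of_finrank_eq (le_antisymm (Submodule.finrank_le _) ?_)
  calc Module.finrank K (∀ i, (f i).range)
      = ∑ i, Module.finrank K (f i).range := Module.finrank_pi_fintype K
    _ = Module.finrank K (∑ i, f i).range := hrank.symm
    _ ≤ _ := finrank_range_sum_le_finrank_range_pi_rangeRestrict

theorem exists_forall_apply_eq_of_finrank_range_sum_eq
    (hrank : Module.finrank K (∑ i, f i).range = ∑ i, Module.finrank K (f i).range)
    (v : ι → V) : ∃ c, ∀ i, f i c = f i (v i) := by
  obtain ⟨c, hc⟩ := pi_rangeRestrict_surjective_of_finrank_range_sum_eq hrank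
    fun i => (f i).rangeRestrict (v i)
  exact ⟨c, fun i => congrArg Subtype.val (congrFun hc i)⟩

end

theorem exists_vector_annihilating_others_general {K ι m n : Type*} [Field K] [Fintype ι]
    [Fintype n] (Q : ι → Matrix m n K)
    (hrank : (∑ i, Q i).rank = ∑ i, (Q i).rank) {i₀ : ι} (h0 : Q i₀ ≠ 0) :
    ∃ c : n → K, Q i₀ *ᵥ c ≠ 0 ∧ ∀ i, i ≠ i₀ → Q i *ᵥ c = 0 := by
  classical
  obtain ⟨v, hv⟩ : ∃ v, Q i₀ *ᵥ v ≠ 0 := by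
    contrapose! h0
    exact Matrix.mulVec_injective (funext fun v => by rw [h0 v, Matrix.zero_mulVec])
  have mulVecLin_sum : (∑ i, Q i).mulVecLin = ∑ i, (Q i).mulVecLin :=
    map_sum (Matrix.mulVecBilin K K) Q Finset.univ
  obtain ⟨c, hc⟩ := exists_forall_apply_eq_of_finrank_range_sum_eq
    (f := fun i => (Q i).mulVecLin) (by rwa [← mulVecLin_sum]) (Pi.single i₀ v)
  simp only [Matrix.mulVecLin_apply] at hc
  refine ⟨c, ?_, fun i hi => ?_⟩
  · rwa [hc i₀, Pi.single_eq_same]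
  · rw [hc i, Pi.single_eq_of_ne hi, Matrix.mulVec_zero]

/-- If `Q₁,…,Q_p` are symmetric matrices with
`rank (∑ i, Q i) = ∑ i, rank (Q i)` and `Q₁ ≠ 0`, then there is a vector `c` with
`Q₁ c ≠ 0` and `Q i c = 0` for all `i ≠ 1`. -/
theorem exists_vector_annihilating_others {m p : ℕ} (hp : 0 < p)
    (Q : Fin p → Matrix (Fin m) (Fin m) ℝ)
    (hQ : ∀ i, (Q i).IsSymm)
    (hrank : (∑ i, Q i).rank = ∑ i, (Q i).rank)
    (h0 : Q ⟨0, hp⟩ ≠ 0) :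
    ∃ c : Fin m → ℝ, (Q ⟨0, hp⟩).mulVec c ≠ 0 ∧
      ∀ i : Fin p, i ≠ ⟨0, hp⟩ → (Q i).mulVec c = 0 :=
  exists_vector_annihilating_others_general Q hrank h0
end

section
/- Let N ⊆ H be a closed subspace and x ∈ Ω, and define the matrix B(x) ∈ ℝ^{m×m} by B(x)_{ij} := ⟨K(x,e_i) − Π_N K(x,e_i), K(x,e_j) − Π_N K(x,e_j)⟩_H, where e_1,…,e_m is the standard basis of ℝ^m. Then for every f ∈ H, the Euclidean norm of the pointwise interpolation error satisfies ‖Φ(f)(x) − Φ(Π_N f)(x)‖_2 ≤ ‖B(x)‖_2^{1/2} · ‖f − Π_N f‖, where ‖B(x)‖_2 is the spectral norm (operator 2-norm) of B(x). -/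
open Matrix BigOperators
open scoped RealInnerProductSpace

/-- The spectral norm (operator 2-norm) of a square real matrix, i.e. the operator norm
of the induced map on Euclidean space. -/
noncomputable def matrixSpectralNorm {m : ℕ} (B : Matrix (Fin m) (Fin m) ℝ) : ℝ :=
  ‖Matrix.toEuclideanCLM (𝕜 := ℝ) B‖

section GramMatrix

open scoped InnerProductSpace Matrix.Norms.L2Operator

variable {𝕜 ι E : Type*} [RCLike 𝕜] [Fintype ι] [DecidableEq ι]

section Bessel

variable [SeminormedAddCommGroup E] [InnerProductSpace 𝕜 E]

theorem norm_sum_smul_le_sqrt_norm_gram (u : ι → E) (c : EuclideanSpace 𝕜 ι) :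
    ‖∑ i, c i • u i‖ ≤ √‖gram 𝕜 u‖ * ‖c‖ := by
  have gram_form : ⟪∑ i, c i • u i, ∑ i, c i • u i⟫_𝕜 =
      ⟪c, toEuclideanCLM (𝕜 := 𝕜) (gram 𝕜 u) c⟫_𝕜 := by
    rw [← star_dotProduct_gram_mulVec, EuclideanSpace.inner_eq_star_dotProduct,
      ofLp_toEuclideanCLM, dotProduct_comm]
  refine le_of_sq_le_sq ?_ (by positivity)
  calc ‖∑ i, c i • u i‖ ^ 2
      = RCLike.re ⟪c, toEuclideanCLM (𝕜 := 𝕜) (gram 𝕜 u) c⟫_𝕜 := by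
        rw [← gram_form, inner_self_eq_norm_sq]
    _ ≤ ‖c‖ * ‖toEuclideanCLM (𝕜 := 𝕜) (gram 𝕜 u) c‖ := re_inner_le_norm _ _
    _ ≤ ‖c‖ * (‖gram 𝕜 u‖ * ‖c‖) := by
        gcongr
        exact (toEuclideanCLM (𝕜 := 𝕜) (gram 𝕜 u)).le_opNorm c
    _ = (√‖gram 𝕜 u‖ * ‖c‖) ^ 2 := by
        rw [mul_pow, Real.sq_sqrt (norm_nonneg _)]
        ring

/-- The coefficient map `g ↦ (⟪u i, g⟫)ᵢ` is formally adjoint to `c ↦ ∑ i, c i • u i`, so it obeys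
the same norm bound; testing against `c := (⟪u i, g⟫)ᵢ` avoids completeness of `E`. -/
theorem norm_toLp_inner_le_sqrt_norm_gram (u : ι → E) (g : E) :
    ‖WithLp.toLp 2 fun i ↦ ⟪u i, g⟫_𝕜‖ ≤ √‖gram 𝕜 u‖ * ‖g‖ := by
  set c : EuclideanSpace 𝕜 ι := WithLp.toLp 2 fun i ↦ ⟪u i, g⟫_𝕜
  have inner_synthesis : ⟪∑ i, c i • u i, g⟫_𝕜 = ⟪c, c⟫_𝕜 := by
    simp only [sum_inner, inner_smul_left, PiLp.inner_apply, RCLike.inner_apply', c]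
  have norm_mul_norm_le : ‖c‖ * ‖c‖ ≤ √‖gram 𝕜 u‖ * ‖g‖ * ‖c‖ :=
    calc ‖c‖ * ‖c‖ = RCLike.re ⟪∑ i, c i • u i, g⟫_𝕜 := by
          rw [inner_synthesis, inner_self_eq_norm_mul_norm]
      _ ≤ ‖∑ i, c i • u i‖ * ‖g‖ := re_inner_le_norm _ _
      _ ≤ √‖gram 𝕜 u‖ * ‖c‖ * ‖g‖ := by
          gcongr
          exact norm_sum_smul_le_sqrt_norm_gram u c
      _ = √‖gram 𝕜 u‖ * ‖g‖ * ‖c‖ := mul_right_comm _ _ _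
  rcases (norm_nonneg c).eq_or_lt with norm_zero | norm_pos
  · rw [← norm_zero]
    positivity
  · exact le_of_mul_le_mul_right norm_mul_norm_le norm_pos

end Bessel

variable [NormedAddCommGroup E] [InnerProductSpace 𝕜 E]

theorem inner_sub_starProjection_sub_starProjection (N : Submodule 𝕜 E)
    [N.HasOrthogonalProjection] (u f : E) :
    ⟪u - N.starProjection u, f - N.starProjection f⟫_𝕜 = ⟪u, f - N.starProjection f⟫_𝕜 := by
  rw [inner_sub_left, Submodule.inner_right_of_mem_orthogonal (N.starProjection_apply_mem u)
    (N.sub_starProjection_mem_orthogonal f), sub_zero]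

theorem euclidean_interpolation_error_bound_general (ev : E → ι → 𝕜) (κ : ι → E)
    (hκ : ∀ f i, ⟪κ i, f⟫_𝕜 = ev f i) (N : Submodule 𝕜 E) [N.HasOrthogonalProjection] (f : E) :
    ‖WithLp.toLp 2 (ev f - ev (N.starProjection f))‖ ≤
      √‖gram 𝕜 fun i ↦ κ i - N.starProjection (κ i)‖ * ‖f - N.starProjection f‖ := by
  have error_eq : ev f - ev (N.starProjection f) =
      fun i ↦ ⟪κ i - N.starProjection (κ i), f - N.starProjection f⟫_𝕜 := by
    funext i
    rw [inner_sub_starProjection_sub_starProjection, inner_sub_right, hκ, hκ, Pi.sub_apply]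
  rw [error_eq]
  exact norm_toLp_inner_le_sqrt_norm_gram _ _

end GramMatrix

/-- Euclidean-norm interpolation error bound:
`‖Φ(f)(x) − Φ(Π_N f)(x)‖₂ ≤ ‖B(x)‖₂^{1/2} · ‖f − Π_N f‖` where
`B(x)_{ij} = ⟪K(x,eᵢ) − Π_N K(x,eᵢ), K(x,eⱼ) − Π_N K(x,eⱼ)⟫`. -/
theorem euclidean_interpolation_error_bound {Ω : Type*} {m : ℕ} {H : Type*}
    [NormedAddCommGroup H] [InnerProductSpace ℝ H]
    (k : Ω → Ω → Matrix (Fin m) (Fin m) ℝ)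
    (hker : ∀ x y, k x y = (k y x)ᵀ)
    (Φ : H →ₗ[ℝ] Ω → Fin m → ℝ) (K : Ω → (Fin m → ℝ) → H)
    (hΦK : ∀ (x : Ω) (α : Fin m → ℝ) (y : Ω), Φ (K x α) y = (k y x).mulVec α)
    (hrep : ∀ (f : H) (x : Ω) (α : Fin m → ℝ), ⟪f, K x α⟫ = Φ f x ⬝ᵥ α)
    (N : Submodule ℝ H) (hclosed : IsClosed (N : Set H)) [Submodule.HasOrthogonalProjection N]
    (x : Ω)
    (B : Matrix (Fin m) (Fin m) ℝ)
    (hB : ∀ i j, B i j =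
      ⟪K x (Pi.single i 1) - Submodule.orthogonalProjection N (K x (Pi.single i 1)),
       K x (Pi.single j 1) - Submodule.orthogonalProjection N (K x (Pi.single j 1))⟫) :
    ∀ f : H,
      Real.sqrt (∑ i, (Φ f x i - Φ (Submodule.orthogonalProjection N f) x i) ^ 2)
        ≤ Real.sqrt (matrixSpectralNorm B) * ‖f - Submodule.orthogonalProjection N f‖ := by
  intro f
  obtain rfl : B = gram ℝ fun i ↦ K x (Pi.single i 1) - N.starProjection (K x (Pi.single i 1)) :=
    Matrix.ext hB
  simpa [EuclideanSpace.norm_eq, matrixSpectralNorm, l2_opNorm_toEuclideanCLM] using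
    euclidean_interpolation_error_bound_general (Φ · x)
      (fun i ↦ K x (Pi.single i 1)) (fun f i ↦ by simp [real_inner_comm, hrep]) N f
end

section
/- Let N ⊆ H be a closed subspace and x ∈ Ω, and define the matrix B(x) ∈ ℝ^{m×m} by B(x)_{ij} := ⟨K(x,e_i) − Π_N K(x,e_i), K(x,e_j) − Π_N K(x,e_j)⟩_H, where e_1,…,e_m is the standard basis of ℝ^m. Then for every f ∈ H, the maximum (infinity) norm of the pointwise interpolation error satisfies ‖Φ(f)(x) − Φ(Π_N f)(x)‖_∞ ≤ (max_{i=1,…,m} B(x)_{ii})^{1/2} · ‖f − Π_N f‖. -/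
open Matrix BigOperators
open scoped RealInnerProductSpace

/-!
The residual `f - Π_N f` is orthogonal to `N`, so a functional `⟪u, ·⟫` does not see the difference
between `u` and `u - Π_N u` on it. Replace each representer of a coordinate of the evaluation at `x`
by its own residual in this way and apply Cauchy–Schwarz.
-/

section ErrorBound

open scoped InnerProductSpace

variable {𝕜 E ι : Type*} [RCLike 𝕜]

theorem norm_le_sqrt_iSup_re_gram_diag [SeminormedAddCommGroup E] [InnerProductSpace 𝕜 E]
    [Finite ι] (v : ι → E) (i : ι) : ‖v i‖ ≤ √(⨆ j, RCLike.re (gram 𝕜 v j j)) := by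
  refine Real.le_sqrt_of_sq_le ?_
  calc ‖v i‖ ^ 2 = RCLike.re (gram 𝕜 v i i) := (inner_self_eq_norm_sq (v i)).symm
    _ ≤ ⨆ j, RCLike.re (gram 𝕜 v j j) :=
        le_ciSup (f := fun j ↦ RCLike.re (gram 𝕜 v j j)) (Finite.bddAbove_range _) i

variable [NormedAddCommGroup E] [InnerProductSpace 𝕜 E]

theorem inner_sub_starProjection_right_eq (N : Submodule 𝕜 E) [N.HasOrthogonalProjection]
    (u f : E) :
    ⟪u, f - N.starProjection f⟫_𝕜 = ⟪u - N.starProjection u, f - N.starProjection f⟫_𝕜 := by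
  have horth : ⟪N.starProjection u, f - N.starProjection f⟫_𝕜 = 0 :=
    Submodule.inner_right_of_mem_orthogonal (N.starProjection_apply_mem u)
      (N.sub_starProjection_mem_orthogonal f)
  rw [inner_sub_left, horth, sub_zero]

theorem norm_inner_sub_starProjection_right_le (N : Submodule 𝕜 E) [N.HasOrthogonalProjection]
    (u f : E) :
    ‖⟪u, f - N.starProjection f⟫_𝕜‖ ≤ ‖u - N.starProjection u‖ * ‖f - N.starProjection f‖ := by
  rw [inner_sub_starProjection_right_eq]
  exact norm_inner_le_norm _ _

theorem supNorm_interpolation_error_bound_general [Fintype ι] (T : E → ι → 𝕜) (v : ι → E)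
    (hrep : ∀ f i, T f i = ⟪v i, f⟫_𝕜) (N : Submodule 𝕜 E) [N.HasOrthogonalProjection]
    (B : Matrix ι ι 𝕜) (hB : B = gram 𝕜 fun i ↦ v i - N.starProjection (v i)) (f : E) :
    ‖T f - T (N.starProjection f)‖ ≤
      √(⨆ i, RCLike.re (B i i)) * ‖f - N.starProjection f‖ := by
  subst hB
  refine (pi_norm_le_iff_of_nonneg (by positivity)).2 fun i ↦ ?_
  calc ‖(T f - T (N.starProjection f)) i‖
      = ‖⟪v i, f - N.starProjection f⟫_𝕜‖ := by
        rw [Pi.sub_apply, hrep, hrep, inner_sub_right]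
    _ ≤ ‖v i - N.starProjection (v i)‖ * ‖f - N.starProjection f‖ :=
        norm_inner_sub_starProjection_right_le N (v i) f
    _ ≤ _ := by
        gcongr
        exact norm_le_sqrt_iSup_re_gram_diag (𝕜 := 𝕜) (fun i ↦ v i - N.starProjection (v i)) i

end ErrorBound

/-- Infinity-norm interpolation error bound:
`‖Φ(f)(x) − Φ(Π_N f)(x)‖_∞ ≤ (max_i B(x)_{ii})^{1/2} · ‖f − Π_N f‖` where
`B(x)_{ij} = ⟪K(x,eᵢ) − Π_N K(x,eᵢ), K(x,eⱼ) − Π_N K(x,eⱼ)⟫`.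
(The default norm on `Fin m → ℝ` is the sup norm.) -/
theorem supNorm_interpolation_error_bound {Ω : Type*} {m : ℕ} {H : Type*}
    [NormedAddCommGroup H] [InnerProductSpace ℝ H]
    (k : Ω → Ω → Matrix (Fin m) (Fin m) ℝ)
    (hker : ∀ x y, k x y = (k y x)ᵀ)
    (Φ : H →ₗ[ℝ] Ω → Fin m → ℝ) (K : Ω → (Fin m → ℝ) → H)
    (hΦK : ∀ (x : Ω) (α : Fin m → ℝ) (y : Ω), Φ (K x α) y = (k y x).mulVec α)
    (hrep : ∀ (f : H) (x : Ω) (α : Fin m → ℝ), ⟪f, K x α⟫ = Φ f x ⬝ᵥ α)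
    (N : Submodule ℝ H) (hclosed : IsClosed (N : Set H)) [Submodule.HasOrthogonalProjection N]
    (x : Ω)
    (B : Matrix (Fin m) (Fin m) ℝ)
    (hB : ∀ i j, B i j =
      ⟪K x (Pi.single i 1) - Submodule.orthogonalProjectionOnto N (K x (Pi.single i 1)),
       K x (Pi.single j 1) - Submodule.orthogonalProjectionOnto N (K x (Pi.single j 1))⟫) :
    ∀ f : H,
      ‖Φ f x - Φ (Submodule.orthogonalProjectionOnto N f) x‖
        ≤ Real.sqrt (⨆ i : Fin m, B i i) * ‖f - Submodule.orthogonalProjectionOnto N f‖ := by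
  exact supNorm_interpolation_error_bound_general (fun f ↦ Φ f x) (fun i ↦ K x (Pi.single i 1))
    (fun f i ↦ by rw [real_inner_comm, hrep, dotProduct_single_one]) N B (Matrix.ext hB)
end
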